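/- 16·∫₀^∞ I₀(t)[K₀(t)]⁵ t dt = (4√3·π³/27)·∫₀¹ [₂F₁(1/3,2/3;1|x)]²·(1−x)^{−1/2} dx. -/

import Mathlib

open Real MeasureTheory Set

/-- Modified Bessel function `I₀(t) = (1/π)∫₀^π exp(t cos θ) dθ`. -/
noncomputable def I0 (t : ℝ) : ℝ := (1 / π) * ∫ θ in (0:ℝ)..π, exp (t * cos θ)

/-- Modified Bessel function `K₀(t) = ∫₀^∞ exp(−t cosh u) du`. -/
noncomputable def K0 (t : ℝ) : ℝ := ∫ u in Ioi (0:ℝ), exp (-(t * Real.cosh u))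

/-- Rising factorial `(a)ₙ = a(a+1)⋯(a+n−1)`. -/
noncomputable def ris (a : ℝ) (n : ℕ) : ℝ := ∏ k ∈ Finset.range n, (a + k)

/-- Generalized hypergeometric series `ₚF_q(a; b | x)`. -/
noncomputable def pFq (a b : List ℝ) (x : ℝ) : ℝ :=
  ∑' n : ℕ, ((a.map fun p => ris p n).prod / (b.map fun q => ris q n).prod) * x ^ n
    / (n.factorial : ℝ)

/-!
Since `K₀²` is a mixture of Gaussians, the sunrise integral is an integral over triangles in the
plane of a product of radial Hankel transforms: that of `K₀²` (the one-loop bubble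
`arsinh w / √(1 + w²)`) on two of the sides and that of `I₀ K₀` (the cut bubble `1 / √(1 + w²)`) on
the third. The cut bubble and the bubble are the real and imaginary parts of a function holomorphic
in the upper half plane. The contour integral of a product of three copies of it vanishes, and its
real part, symmetrised over the sides of the triangle, turns two bubbles into two further cuts.

Introducing Feynman parameters `x₁ + x₂ + x₃ = 1` for the three cuts leaves a planar integral which
depends only on `y = 27 x₁ x₂ x₃`. It is an elliptic integral, and the substitution
`N = 4 / 3 sinh² α` evaluates it as a multiple of `₂F₁(1/3, 2/3; 1 | 1 - y)`. The remaining average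
over the simplex is an integral of this function against the law of `y`. The moments of that law are
beta and Wallis integrals, and by Gauss's summation theorem they are those of the density
`₂F₁(1/3, 2/3; 1 | 1 - y) / √y`, up to a factor `π / 3`. Hence the second factor `₂F₁`.
-/

open Filter Topology
open ENNReal (ofReal)
open ProbabilityTheory (beta beta_pos)

/-! ### Lower Lebesgue integrals on the line and on the plane -/

theorem setLIntegral_ofReal_eq_of_bijOn {s t : Set ℝ} {f f' G H : ℝ → ℝ} (hs : MeasurableSet s)
    (hf' : ∀ x ∈ s, HasDerivAt f (f' x) x) (hf : BijOn f s t)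
    (hGH : ∀ x ∈ s, |f' x| * G (f x) = H x) :
    ∫⁻ y in t, ofReal (G y) = ∫⁻ x in s, ofReal (H x) := by
  rw [← hf.image_eq, lintegral_image_eq_lintegral_abs_deriv_mul hs
    (fun x hx => (hf' x hx).hasDerivWithinAt) hf.injOn]
  refine setLIntegral_congr_fun hs fun x hx => ?_
  rw [← ENNReal.ofReal_mul (abs_nonneg _), hGH x hx]

theorem lintegral_ofReal_comp_two_mul_add (G : ℝ → ℝ) (v : ℝ) :
    ∫⁻ p, ofReal (G p) = 2 * ∫⁻ q, ofReal (G (2 * q + v)) := by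
  have inverse : InvOn (fun p => (p - v) / 2) (fun q => 2 * q + v) univ univ :=
    ⟨fun q _ => by ring, fun p _ => by ring⟩
  rw [← lintegral_const_mul' _ _ ENNReal.ofNat_ne_top, ← setLIntegral_univ,
    ← setLIntegral_univ (f := fun q => 2 * _),
    setLIntegral_ofReal_eq_of_bijOn (f := fun q => 2 * q + v) (f' := fun _ => 2)
      (H := fun q => 2 * G (2 * q + v)) MeasurableSet.univ
      (fun q _ => by simpa using ((hasDerivAt_id q).const_mul 2).add_const v)
      (inverse.bijOn (mapsTo_univ _ _) (mapsTo_univ _ _)) (fun q _ => by rw [abs_two])]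
  exact lintegral_congr fun q => by rw [ENNReal.ofReal_mul zero_le_two, ENNReal.ofReal_ofNat]

theorem lintegral_Ioi_comp_two_mul (F : ℝ → ENNReal) :
    ∫⁻ x in Ioi (0 : ℝ), F x = 2 * ∫⁻ x in Ioi (0 : ℝ), F (2 * x) := by
  have image_eq : (fun x : ℝ => 2 * x) '' Ioi 0 = Ioi 0 := by
    rw [image_mul_left_Ioi two_pos, mul_zero]
  rw [← lintegral_const_mul' _ _ ENNReal.ofNat_ne_top]
  nth_rw 1 [← image_eq]
  rw [lintegral_image_eq_lintegral_abs_deriv_mul measurableSet_Ioi (f' := fun _ => 2)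
    (fun x _ => by simpa using ((hasDerivAt_id x).const_mul 2).hasDerivWithinAt)
    (mul_right_injective₀ two_ne_zero).injOn]
  simp

theorem lintegral_ofReal_of_even {G : ℝ → ℝ} (hG : ∀ x, G (-x) = G x) :
    ∫⁻ x, ofReal (G x) = 2 * ∫⁻ x in Ioi (0 : ℝ), ofReal (G x) := by
  have neg_half : ∫⁻ x in Iio (0 : ℝ), ofReal (G x) = ∫⁻ x in Ioi (0 : ℝ), ofReal (G x) :=
    setLIntegral_ofReal_eq_of_bijOn (f := fun x => -x) (f' := fun _ => -1) measurableSet_Ioi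
      (fun x _ => (hasDerivAt_id x).neg)
      (InvOn.bijOn (f' := fun x => -x) ⟨fun x _ => neg_neg x, fun x _ => neg_neg x⟩
        (fun x hx => by simpa using hx) (fun x hx => by simpa using hx)) (by simp [hG])
  rw [← lintegral_add_compl _ (measurableSet_Iic (a := (0 : ℝ))), compl_Iic,
    setLIntegral_congr (Iio_ae_eq_Iic (a := (0 : ℝ))).symm, neg_half, two_mul]

theorem lintegral_complex {F : ℂ → ENNReal} (hF : Measurable F) :
    ∫⁻ z, F z = ∫⁻ x : ℝ, ∫⁻ y : ℝ, F ⟨x, y⟩ := by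
  rw [← Complex.volume_preserving_equiv_real_prod.symm.lintegral_comp_emb
    Complex.measurableEquivRealProd.symm.measurableEmbedding, Measure.volume_eq_prod]
  exact lintegral_prod _ (hF.comp Complex.measurableEquivRealProd.symm.measurable).aemeasurable

theorem lintegral_complex_polar {F : ℂ → ENNReal} (hF : Measurable F) :
    ∫⁻ z, F z = ∫⁻ r in Ioi (0 : ℝ), ∫⁻ θ in Ioo (-π) π,
      ofReal r * F (r * (cos θ + sin θ * Complex.I)) := by
  have target_eq : polarCoord.target = Ioi (0 : ℝ) ×ˢ Ioo (-π) π := rfl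
  rw [← Complex.lintegral_comp_polarCoord_symm, target_eq, Measure.volume_eq_prod,
    ← Measure.prod_restrict, lintegral_prod]
  · simp [Complex.polarCoord_symm_apply]
  · simp only [Complex.polarCoord_symm_apply, smul_eq_mul]
    exact (Measurable.mul (by fun_prop) (hF.comp (by fun_prop))).aemeasurable

theorem norm_ofReal_mul_cos_add_sin_mul_I {r : ℝ} (hr : 0 ≤ r) (θ : ℝ) :
    ‖(r * (cos θ + sin θ * Complex.I) : ℂ)‖ = r := by
  rw [norm_mul, Complex.ofReal_cos, Complex.ofReal_sin, Complex.norm_cos_add_sin_mul_I,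
    Complex.norm_real, Real.norm_of_nonneg hr, mul_one]

theorem lintegral_comp_norm_complex {F : ℝ → ENNReal} (hF : Measurable F) :
    ∫⁻ z : ℂ, F ‖z‖ = ofReal (2 * π) * ∫⁻ r in Ioi (0 : ℝ), ofReal r * F r := by
  rw [lintegral_complex_polar (by fun_prop), ← lintegral_const_mul' _ _ ENNReal.ofReal_ne_top]
  refine setLIntegral_congr_fun measurableSet_Ioi fun r hr => ?_
  simp only [norm_ofReal_mul_cos_add_sin_mul_I (le_of_lt hr)]
  rw [setLIntegral_const, Real.volume_Ioo, mul_comm, sub_neg_eq_add, ← two_mul]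

theorem lintegral_complex_comp_mul_left {v : ℂ} (hv : v ≠ 0) (F : ℂ → ENNReal) :
    ∫⁻ k, F k = ∫⁻ z, ofReal (‖v‖ ^ 2) * F (v * z) := by
  have : 0 < ‖v‖ := norm_pos_iff.2 hv
  have det_eq : LinearMap.det (LinearMap.mulLeft ℝ v) = ‖v‖ ^ 2 := by
    rw [← Complex.normSq_eq_norm_sq, ← Algebra.norm_complex_apply]; rfl
  have map_eq : Measure.map (fun z => v * z) volume =
      ofReal |(‖v‖ ^ 2)⁻¹| • (volume : Measure ℂ) := by
    rw [← det_eq]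
    exact Measure.map_linearMap_addHaar_eq_smul_addHaar volume (by rw [det_eq]; positivity)
  have map_lintegral := (Homeomorph.mulLeft₀ v hv).measurableEmbedding.lintegral_map
    (μ := volume) F
  simp only [Homeomorph.coe_mulLeft₀] at map_lintegral
  rw [map_eq, lintegral_smul_measure] at map_lintegral
  rw [lintegral_const_mul' _ _ ENNReal.ofReal_ne_top, ← map_lintegral, smul_eq_mul, ← mul_assoc,
    ← ENNReal.ofReal_mul (by positivity), abs_of_pos (by positivity),
    mul_inv_cancel₀ (by positivity), ENNReal.ofReal_one, one_mul]

theorem lintegral_complex_norm_norm_sub {v : ℂ} (hv : v ≠ 0) (F : ℝ → ℝ → ENNReal) :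
    ∫⁻ k : ℂ, F ‖k‖ ‖v - k‖ = ∫⁻ z : ℂ, ofReal (‖v‖ ^ 2) * F (‖v‖ * ‖z‖) (‖v‖ * ‖1 - z‖) := by
  rw [lintegral_complex_comp_mul_left hv]
  refine lintegral_congr fun z => ?_
  rw [← norm_mul, ← norm_mul, mul_sub, mul_one]

theorem lintegral_exp_neg_mul_sq_add_mul {α : ℝ} (hα : 0 < α) (c : ℝ) :
    ∫⁻ x : ℝ, ofReal (exp (-α * x ^ 2 + c * x)) =
      ofReal (√(π / α) * exp (c ^ 2 / (4 * α))) := by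
  have complete_square : ∀ x : ℝ, ofReal (exp (-α * x ^ 2 + c * x)) =
      ofReal (exp (c ^ 2 / (4 * α))) * ofReal (exp (-α * (x - c / (2 * α)) ^ 2)) := by
    intro x
    rw [← ENNReal.ofReal_mul (exp_pos _).le, ← Real.exp_add]
    congr 2; field_simp; ring
  simp_rw [complete_square]
  rw [lintegral_const_mul _ (by fun_prop),
    lintegral_sub_right_eq_self (fun x => ofReal (exp (-α * x ^ 2))),
    ← ofReal_integral_eq_lintegral_ofReal (integrable_exp_neg_mul_sq hα)
      (ae_of_all _ fun _ => (Real.exp_pos _).le), integral_gaussian,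
    ← ENNReal.ofReal_mul (exp_pos _).le, mul_comm]

theorem lintegral_complex_exp_neg_mul_norm_sq_add_mul_re {α : ℝ} (hα : 0 < α) (c : ℝ) :
    ∫⁻ z : ℂ, ofReal (exp (-α * ‖z‖ ^ 2 + c * z.re)) =
      ofReal (π / α * exp (c ^ 2 / (4 * α))) := by
  have factor : ∀ x y : ℝ, ofReal (exp (-α * ‖(⟨x, y⟩ : ℂ)‖ ^ 2 + c * (⟨x, y⟩ : ℂ).re)) =
      ofReal (exp (-α * x ^ 2 + c * x)) * ofReal (exp (-α * y ^ 2 + 0 * y)) := by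
    intro x y
    rw [← ENNReal.ofReal_mul (exp_pos _).le, ← Real.exp_add, ← Complex.normSq_eq_norm_sq,
      Complex.normSq_mk]
    congr 2; ring
  rw [lintegral_complex (by fun_prop)]
  simp_rw [factor, lintegral_const_mul' _ _ ENNReal.ofReal_ne_top]
  rw [lintegral_mul_const _ (by fun_prop), lintegral_exp_neg_mul_sq_add_mul hα,
    lintegral_exp_neg_mul_sq_add_mul hα, ← ENNReal.ofReal_mul (by positivity)]
  have sqrt_mul_sqrt : √(π / α) * √(π / α) = π / α := Real.mul_self_sqrt (by positivity)
  congr 1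
  rw [zero_pow two_ne_zero, zero_div, Real.exp_zero]
  linear_combination exp (c ^ 2 / (4 * α)) * sqrt_mul_sqrt

theorem ae_ne_complex (v : ℂ) : ∀ᵐ k : ℂ, k ≠ v := by simp [ae_iff]

/-! ### The modified Bessel functions -/

theorem I0_nonneg (t : ℝ) : 0 ≤ I0 t := by
  have integral_nonneg : 0 ≤ ∫ θ in (0 : ℝ)..π, exp (t * cos θ) :=
    intervalIntegral.integral_nonneg pi_pos.le fun θ _ => (exp_pos _).le
  unfold I0
  positivity

@[fun_prop]
theorem continuous_I0 : Continuous I0 :=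
  continuous_const.mul <|
    intervalIntegral.continuous_parametric_intervalIntegral_of_continuous' (by fun_prop) _ _

theorem lintegral_exp_mul_cos (t : ℝ) :
    ∫⁻ θ in Ioo (-π) π, ofReal (exp (t * cos θ)) = ofReal (2 * π) * ofReal (I0 t) := by
  have integrable : ∀ a b : ℝ, IntervalIntegrable (fun θ => exp (t * cos θ)) volume a b :=
    fun a b => (by fun_prop : Continuous fun θ => exp (t * cos θ)).intervalIntegrable a b
  have reflect := intervalIntegral.integral_comp_neg (a := 0) (b := π) fun θ => exp (t * cos θ)
  simp only [cos_neg, neg_zero] at reflect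
  rw [setLIntegral_congr Ioo_ae_eq_Ioc, ← ofReal_integral_eq_lintegral_ofReal
      ((intervalIntegrable_iff_integrableOn_Ioc_of_le (by linarith [pi_pos])).1
        (integrable (-π) π)) (ae_of_all _ fun _ => (Real.exp_pos _).le),
    ← ENNReal.ofReal_mul (by positivity), I0,
    ← intervalIntegral.integral_of_le (by linarith [pi_pos]),
    ← intervalIntegral.integral_add_adjacent_intervals (integrable (-π) 0) (integrable 0 π),
    ← reflect]
  congr 1
  field_simp; ring

theorem K0_nonneg (t : ℝ) : 0 ≤ K0 t := integral_nonneg fun _ => (Real.exp_pos _).le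

@[fun_prop]
theorem measurable_K0 : Measurable K0 := by
  have kernel : Continuous (Function.uncurry fun t u : ℝ => exp (-(t * cosh u))) := by fun_prop
  exact (kernel.stronglyMeasurable.integral_prod_right
    (ν := volume.restrict (Ioi (0 : ℝ)))).measurable

theorem integrableOn_exp_neg_mul_cosh {t : ℝ} (ht : 0 < t) :
    IntegrableOn (fun u => exp (-(t * cosh u))) (Ioi (0 : ℝ)) := by
  refine (exp_neg_integrableOn_Ioi 0 (half_pos ht)).mono' (by fun_prop) (ae_of_all _ fun u => ?_)
  have half_le_cosh : u / 2 ≤ cosh u := by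
    rw [Real.cosh_eq]; linarith [Real.add_one_le_exp u, Real.exp_pos (-u)]
  rw [Real.norm_of_nonneg (Real.exp_pos _).le, Real.exp_le_exp]
  nlinarith

theorem lintegral_exp_neg_mul_cosh {t : ℝ} (ht : 0 < t) :
    ∫⁻ p, ofReal (exp (-(t * cosh p))) = 2 * ofReal (K0 t) := by
  rw [lintegral_ofReal_of_even (by simp), K0, ofReal_integral_eq_lintegral_ofReal
    (integrableOn_exp_neg_mul_cosh ht) (ae_of_all _ fun _ => (Real.exp_pos _).le)]

theorem lintegral_exp_neg_mul_cosh_eq_lintegral_exp_neg_sub {z : ℝ} (hz : 0 < z) :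
    ∫⁻ p, ofReal (exp (-(z * cosh p))) =
      ∫⁻ a in Ioi (0 : ℝ), ofReal (exp (-a - z ^ 2 / (4 * a)) / a) := by
  rw [← setLIntegral_univ]
  have bijection : BijOn (fun p => z / 2 * exp p) univ (Ioi 0) := by
    refine InvOn.bijOn (f' := fun a => log (a / (z / 2))) ⟨fun p _ => ?_, fun a ha => ?_⟩
      (fun p _ => mem_Ioi.2 (by positivity)) (mapsTo_univ _ _)
    · simp only [mul_div_cancel_left₀ _ (half_pos hz).ne', Real.log_exp]
    · rw [mem_Ioi] at ha
      simp only [Real.exp_log (div_pos ha (half_pos hz)), mul_div_cancel₀ _ (half_pos hz).ne']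
  refine (setLIntegral_ofReal_eq_of_bijOn MeasurableSet.univ
    (fun p _ => (Real.hasDerivAt_exp p).const_mul _) bijection fun p _ => ?_).symm
  have exponent : -(z / 2 * exp p) - z ^ 2 / (4 * (z / 2 * exp p)) = -(z * cosh p) := by
    rw [Real.cosh_eq, Real.exp_neg]; field_simp; ring
  rw [exponent, abs_of_pos (by positivity)]
  field_simp

theorem cosh_add_cosh_two_mul_add (q v : ℝ) :
    cosh v + cosh (2 * q + v) = 2 * cosh q * cosh (v + q) := by
  have h₁ := Real.cosh_add (v + q) q
  have h₂ := Real.cosh_sub (v + q) q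
  rw [show v + q + q = 2 * q + v by ring] at h₁
  rw [add_sub_cancel_right] at h₂
  rw [h₁, h₂]; ring

theorem ofReal_K0_sq_eq_lintegral_cosh_mul_cosh {t : ℝ} (ht : 0 < t) :
    2 * ofReal (K0 t ^ 2) =
      ∫⁻ q, ∫⁻ p, ofReal (exp (-(2 * t * cosh q * cosh p))) := by
  have rotate : ∀ v, ofReal (exp (-(t * cosh v))) * (2 * ofReal (K0 t)) =
      2 * ∫⁻ q, ofReal (exp (-(2 * t * cosh q * cosh (v + q)))) := by
    intro v
    rw [← lintegral_exp_neg_mul_cosh ht, lintegral_ofReal_comp_two_mul_add _ v, mul_left_comm,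
      ← lintegral_const_mul _ (by fun_prop)]
    congr! 3 with q
    rw [← ENNReal.ofReal_mul (Real.exp_pos _).le, ← Real.exp_add]
    congr 2
    linear_combination (-t) * cosh_add_cosh_two_mul_add q v
  have square : 2 * (2 * ofReal (K0 t ^ 2)) =
      ∫⁻ v, ofReal (exp (-(t * cosh v))) * (2 * ofReal (K0 t)) := by
    rw [lintegral_mul_const _ (by fun_prop), lintegral_exp_neg_mul_cosh ht, sq,
      ENNReal.ofReal_mul (K0_nonneg t)]
    ring
  refine (ENNReal.mul_right_inj two_ne_zero ENNReal.ofNat_ne_top).1 ?_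
  simp_rw [square, rotate]
  rw [lintegral_const_mul' _ _ ENNReal.ofNat_ne_top, lintegral_lintegral_swap (by fun_prop)]
  congr! 3 with q
  exact lintegral_add_right_eq_self (fun p => ofReal (exp (-(2 * t * cosh q * cosh p)))) q

theorem ofReal_K0_sq_eq_lintegral_gaussian {t : ℝ} (ht : 0 < t) :
    2 * ofReal (K0 t ^ 2) = ∫⁻ q, ∫⁻ a in Ioi (0 : ℝ),
      ofReal (exp (-a - t ^ 2 * cosh q ^ 2 / a) / a) := by
  rw [ofReal_K0_sq_eq_lintegral_cosh_mul_cosh ht]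
  refine lintegral_congr fun q => ?_
  have := Real.cosh_pos q
  rw [lintegral_exp_neg_mul_cosh_eq_lintegral_exp_neg_sub (by positivity)]
  refine setLIntegral_congr_fun measurableSet_Ioi fun a ha => ?_
  rw [mem_Ioi] at ha
  congr 4; field_simp; ring

/-- The Hankel transform `r ↦ ∫₀^∞ J₀(rt) exp(-l t²) t dt` of order zero of a Gaussian, that is, the
radial profile of the heat kernel of the plane up to normalisation. -/
noncomputable def gaussianKernel (l r : ℝ) : ℝ := exp (-r ^ 2 / (4 * l)) / (2 * l)

theorem gaussianKernel_nonneg {l : ℝ} (hl : 0 ≤ l) (r : ℝ) : 0 ≤ gaussianKernel l r := by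
  unfold gaussianKernel; positivity

@[fun_prop]
theorem measurable_gaussianKernel {Ω : Type*} [MeasurableSpace Ω] {f g : Ω → ℝ}
    (hf : Measurable f) (hg : Measurable g) : Measurable fun x => gaussianKernel (f x) (g x) := by
  unfold gaussianKernel; fun_prop

theorem lintegral_gaussianKernel_mul_gaussianKernel {l m : ℝ} (hl : 0 < l) (hm : 0 < m) (v : ℝ) :
    ∫⁻ k : ℂ, ofReal (gaussianKernel l ‖k‖) * ofReal (gaussianKernel m ‖v - k‖) =
      ofReal (2 * π) * ofReal (gaussianKernel (l + m) v) := by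
  have factor : ∀ k : ℂ, ofReal (gaussianKernel l ‖k‖) * ofReal (gaussianKernel m ‖v - k‖) =
      ofReal (exp (-v ^ 2 / (4 * m)) / (4 * l * m)) *
        ofReal (exp (-(1 / (4 * l) + 1 / (4 * m)) * ‖k‖ ^ 2 + v / (2 * m) * k.re)) := by
    intro k
    have exponents : exp (-‖k‖ ^ 2 / (4 * l)) * exp (-‖v - k‖ ^ 2 / (4 * m)) =
        exp (-v ^ 2 / (4 * m)) *
          exp (-(1 / (4 * l) + 1 / (4 * m)) * ‖k‖ ^ 2 + v / (2 * m) * k.re) := by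
      rw [← Real.exp_add, ← Real.exp_add, ← Complex.normSq_eq_norm_sq,
        ← Complex.normSq_eq_norm_sq, Complex.normSq_apply, Complex.normSq_apply]
      congr 1
      simp only [Complex.sub_re, Complex.sub_im, Complex.ofReal_re, Complex.ofReal_im]
      field_simp; ring
    rw [← ENNReal.ofReal_mul (gaussianKernel_nonneg hl.le _), ← ENNReal.ofReal_mul (by positivity)]
    congr 1
    unfold gaussianKernel
    linear_combination (1 / (4 * l * m)) * exponents
  have exponent : -v ^ 2 / (4 * (l + m)) =
      -v ^ 2 / (4 * m) + (v / (2 * m)) ^ 2 / (4 * (1 / (4 * l) + 1 / (4 * m))) := by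
    field_simp; ring
  simp_rw [factor]
  rw [lintegral_const_mul' _ _ ENNReal.ofReal_ne_top,
    lintegral_complex_exp_neg_mul_norm_sq_add_mul_re (by positivity),
    ← ENNReal.ofReal_mul (by positivity), ← ENNReal.ofReal_mul (by positivity)]
  congr 1
  rw [gaussianKernel, exponent, Real.exp_add]
  field_simp; ring

theorem lintegral_I0_mul_gaussian {α : ℝ} (hα : 0 < α) :
    ∫⁻ t in Ioi (0 : ℝ), ofReal (I0 t * exp (-α * t ^ 2) * t) =
      ofReal (exp (1 / (4 * α)) / (2 * α)) := by
  have plane_integral := lintegral_complex_exp_neg_mul_norm_sq_add_mul_re hα 1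
  rw [lintegral_complex_polar (by fun_prop)] at plane_integral
  have angular : ∀ r ∈ Ioi (0 : ℝ), ∫⁻ θ in Ioo (-π) π, ofReal r *
      ofReal (exp (-α * ‖(r * (cos θ + sin θ * Complex.I) : ℂ)‖ ^ 2
        + 1 * (r * (cos θ + sin θ * Complex.I) : ℂ).re)) =
      ofReal (2 * π) * ofReal (I0 r * exp (-α * r ^ 2) * r) := by
    intro r (hr : 0 < r)
    have integrand : ∀ θ : ℝ, ofReal r *
        ofReal (exp (-α * ‖(r * (cos θ + sin θ * Complex.I) : ℂ)‖ ^ 2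
          + 1 * (r * (cos θ + sin θ * Complex.I) : ℂ).re)) =
        ofReal (exp (-α * r ^ 2) * r) * ofReal (exp (r * cos θ)) := by
      intro θ
      have re_eq : (r * (cos θ + sin θ * Complex.I) : ℂ).re = r * cos θ := by
        simp [-Complex.ofReal_cos, -Complex.ofReal_sin]
      rw [norm_ofReal_mul_cos_add_sin_mul_I hr.le, re_eq, one_mul, Real.exp_add,
        ← ENNReal.ofReal_mul hr.le, ← ENNReal.ofReal_mul (by positivity)]
      congr 1
      ring
    simp_rw [integrand]
    rw [lintegral_const_mul' _ _ ENNReal.ofReal_ne_top, lintegral_exp_mul_cos, mul_comm, mul_assoc,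
      ← ENNReal.ofReal_mul (I0_nonneg r), mul_assoc]
  rw [setLIntegral_congr_fun measurableSet_Ioi angular,
    lintegral_const_mul' _ _ ENNReal.ofReal_ne_top] at plane_integral
  refine (ENNReal.mul_right_inj (by simp [pi_pos]) ENNReal.ofReal_ne_top).1
    (plane_integral.trans ?_)
  rw [← ENNReal.ofReal_mul (by positivity), one_pow]
  congr 1; field_simp

theorem lintegral_div_sqrt_sq_add_four (G : ℝ → ℝ) :
    ∫⁻ v in Ioi (0 : ℝ), ofReal (G v / √(v ^ 2 + 4)) =
      ∫⁻ s in Ioi (0 : ℝ), ofReal (G (2 * sinh s)) := by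
  have bijection : BijOn (fun s => 2 * sinh s) (Ioi 0) (Ioi 0) :=
    InvOn.bijOn (f' := fun v => arsinh (v / 2)) ⟨fun s _ => by simp, fun v _ => by simp; ring⟩
      (fun s hs => mul_pos two_pos (Real.sinh_pos_iff.2 hs))
      (fun v hv => Real.arsinh_pos_iff.2 (half_pos hv))
  refine setLIntegral_ofReal_eq_of_bijOn measurableSet_Ioi
    (fun s _ => (Real.hasDerivAt_sinh s).const_mul 2) bijection fun s _ => ?_
  have sqrt_eq : √((2 * sinh s) ^ 2 + 4) = 2 * cosh s := by
    rw [show (2 * sinh s) ^ 2 + 4 = (2 * cosh s) ^ 2 by rw [mul_pow, mul_pow, Real.cosh_sq]; ring,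
      Real.sqrt_sq (by positivity)]
  rw [sqrt_eq, abs_of_pos (by positivity)]
  field_simp

/-- Both sides become an integral of `exp (-4 sinh² s / c)`, through `v = 2 sinh s` and
`1 + c a = exp (2 s)`. -/
theorem lintegral_exp_neg_add_div_one_add_mul {c : ℝ} (hc : 0 < c) :
    ∫⁻ a in Ioi (0 : ℝ), ofReal (exp (-a + a / (1 + c * a)) / (1 + c * a)) =
      ∫⁻ v in Ioi (0 : ℝ), ofReal (2 / c * exp (-v ^ 2 / c) / √(v ^ 2 + 4)) := by
  have bijection : BijOn (fun s => (exp (2 * s) - 1) / c) (Ioi 0) (Ioi 0) := by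
    refine InvOn.bijOn (f' := fun a => log (1 + c * a) / 2) ⟨fun s _ => ?_, fun a ha => ?_⟩
      (fun s hs => ?_) (fun a ha => ?_)
    · simp only [mul_div_cancel₀ _ hc.ne', add_sub_cancel, Real.log_exp]; ring
    · rw [mem_Ioi] at ha
      simp only [mul_div_cancel₀ _ (two_ne_zero (α := ℝ)),
        Real.exp_log (show 0 < 1 + c * a by positivity)]
      field_simp; ring
    · rw [mem_Ioi] at hs
      exact div_pos (sub_pos.2 (Real.one_lt_exp_iff.2 (by positivity))) hc
    · rw [mem_Ioi] at ha
      exact half_pos (Real.log_pos (by nlinarith))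
  have derivative : ∀ s ∈ Ioi (0 : ℝ),
      HasDerivAt (fun s => (exp (2 * s) - 1) / c) (2 * exp (2 * s) / c) s := by
    intro s _
    have := ((((hasDerivAt_id s).const_mul 2).exp).sub_const 1).div_const c
    simpa [mul_comm] using this
  rw [lintegral_div_sqrt_sq_add_four]
  refine setLIntegral_ofReal_eq_of_bijOn measurableSet_Ioi derivative bijection fun s _ => ?_
  have one_add : 1 + c * ((exp (2 * s) - 1) / c) = exp (2 * s) := by field_simp; ring
  have exponent : -((exp (2 * s) - 1) / c) + (exp (2 * s) - 1) / c / exp (2 * s) =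
      -(2 * sinh s) ^ 2 / c := by
    rw [Real.sinh_eq, two_mul s, Real.exp_add, Real.exp_neg]; field_simp; ring
  rw [one_add, exponent, abs_of_pos (by positivity)]
  field_simp

theorem ofReal_I0_mul_K0_mul_gaussian {L t : ℝ} (ht : 0 < t) :
    2 * ofReal (I0 t * K0 t * exp (-L * t ^ 2) * t) = ∫⁻ a in Ioi (0 : ℝ),
      ofReal (exp (-a) / a) * ofReal (I0 t * exp (-(L + 1 / (4 * a)) * t ^ 2) * t) := by
  have I0_nonneg := I0_nonneg t
  have K0_last : I0 t * K0 t * exp (-L * t ^ 2) * t = I0 t * exp (-L * t ^ 2) * t * K0 t := by ring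
  rw [K0_last, ENNReal.ofReal_mul (by positivity), mul_left_comm, ← lintegral_exp_neg_mul_cosh ht,
    lintegral_exp_neg_mul_cosh_eq_lintegral_exp_neg_sub ht,
    ← lintegral_const_mul' _ _ ENNReal.ofReal_ne_top]
  refine setLIntegral_congr_fun measurableSet_Ioi fun a ha => ?_
  rw [mem_Ioi] at ha
  have exponents : exp (-L * t ^ 2) * exp (-a - t ^ 2 / (4 * a)) =
      exp (-a) * exp (-(L + 1 / (4 * a)) * t ^ 2) := by
    rw [← Real.exp_add, ← Real.exp_add]; congr 1; field_simp; ring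
  rw [← ENNReal.ofReal_mul (by positivity), ← ENNReal.ofReal_mul (by positivity)]
  congr 1
  linear_combination (I0 t * t / a) * exponents

theorem lintegral_I0_mul_K0_mul_gaussian {L : ℝ} (hL : 0 < L) :
    ∫⁻ t in Ioi (0 : ℝ), ofReal (I0 t * K0 t * exp (-L * t ^ 2) * t) =
      ∫⁻ v in Ioi (0 : ℝ), ofReal (gaussianKernel L v / √(v ^ 2 + 4)) := by
  have inner : ∀ a ∈ Ioi (0 : ℝ), ∫⁻ t in Ioi (0 : ℝ),
      ofReal (exp (-a) / a) * ofReal (I0 t * exp (-(L + 1 / (4 * a)) * t ^ 2) * t) =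
      2 * ofReal (exp (-a + a / (1 + 4 * L * a)) / (1 + 4 * L * a)) := by
    intro a (ha : 0 < a)
    rw [lintegral_const_mul' _ _ ENNReal.ofReal_ne_top, lintegral_I0_mul_gaussian (by positivity),
      ← ENNReal.ofReal_mul (by positivity), ← ENNReal.ofReal_ofNat,
      ← ENNReal.ofReal_mul zero_le_two]
    congr 1
    have exponent : 1 / (4 * (L + 1 / (4 * a))) = a / (1 + 4 * L * a) := by field_simp; ring
    rw [exponent, Real.exp_add]; field_simp; ring
  refine (ENNReal.mul_right_inj two_ne_zero ENNReal.ofNat_ne_top).1 ?_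
  rw [← lintegral_const_mul' _ _ ENNReal.ofNat_ne_top,
    setLIntegral_congr_fun measurableSet_Ioi fun t ht => ofReal_I0_mul_K0_mul_gaussian ht,
    lintegral_lintegral_swap (by fun_prop), setLIntegral_congr_fun measurableSet_Ioi inner,
    lintegral_const_mul' _ _ ENNReal.ofNat_ne_top,
    lintegral_exp_neg_add_div_one_add_mul (by positivity)]
  congr! 4 with v
  unfold gaussianKernel
  field_simp; ring

/-! ### The bubble and the Gaussian mixture representation of `K₀²` -/

theorem sq_le_sinh_sq (x : ℝ) : x ^ 2 ≤ sinh x ^ 2 := by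
  rw [sq_le_sq, Real.abs_sinh]
  exact Real.self_le_sinh_iff.2 (abs_nonneg x)

theorem one_add_sq_div_two_le_cosh (x : ℝ) : 1 + x ^ 2 / 2 ≤ cosh x := by
  have double := Real.cosh_two_mul (x / 2)
  rw [mul_div_cancel₀ _ two_ne_zero, Real.cosh_sq] at double
  linarith [sq_le_sinh_sq (x / 2)]

theorem one_add_sq_div_eight_le_sqrt_cosh (x : ℝ) : (1 + x ^ 2) / 8 ≤ √(cosh x) := by
  have double := Real.cosh_two_mul (x / 2)
  rw [mul_div_cancel₀ _ two_ne_zero, Real.sinh_sq] at double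
  have half : (1 + (x / 2) ^ 2 / 2) ^ 2 ≤ cosh (x / 2) ^ 2 := by
    gcongr; exact one_add_sq_div_two_le_cosh _
  apply Real.le_sqrt_of_sq_le
  nlinarith [sq_nonneg x, sq_nonneg (x ^ 2)]

theorem integrable_one_div_sqrt_cosh : Integrable fun q : ℝ => 1 / √(cosh q) := by
  have meas : Measurable fun q : ℝ => 1 / √(cosh q) := by fun_prop
  refine (integrable_inv_one_add_sq.const_mul 8).mono' meas.aestronglyMeasurable
    (ae_of_all _ fun q => ?_)
  rw [Real.norm_of_nonneg (by positivity)]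
  calc 1 / √(cosh q) ≤ 1 / ((1 + q ^ 2) / 8) := by
        gcongr; exact one_add_sq_div_eight_le_sqrt_cosh q
    _ = 8 * (1 + q ^ 2)⁻¹ := by field_simp

theorem integrable_one_div_cosh_sq_add_sq (w : ℝ) :
    Integrable fun q : ℝ => 1 / (cosh q ^ 2 + w ^ 2) := by
  have meas : Measurable fun q : ℝ => 1 / (cosh q ^ 2 + w ^ 2) := by fun_prop
  refine integrable_one_div_sqrt_cosh.mono' meas.aestronglyMeasurable (ae_of_all _ fun q => ?_)
  have one_le : 1 ≤ cosh q := Real.one_le_cosh q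
  rw [Real.norm_of_nonneg (by positivity)]
  apply one_div_le_one_div_of_le (by positivity)
  calc √(cosh q) ≤ cosh q := Real.sqrt_le_iff.2 ⟨by positivity, by nlinarith⟩
    _ ≤ cosh q ^ 2 + w ^ 2 := by nlinarith [sq_nonneg w]

/-- `bubble (k / 2) / k` is the Hankel transform `∫₀^∞ J₀(kt) K₀(t)² t dt`: the one-loop bubble of
two-dimensional field theory. In closed form `bubble w = arsinh w / √(1 + w²)`. -/
noncomputable def bubble (w : ℝ) : ℝ := w / 2 * ∫ q : ℝ, 1 / (cosh q ^ 2 + w ^ 2)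

/-- `cutBubble (k / 2) / (2 k)` is the Hankel transform `∫₀^∞ J₀(kt) I₀(t) K₀(t) t dt`, which is,
up to a factor, the discontinuity of the bubble. -/
noncomputable def cutBubble (w : ℝ) : ℝ := 1 / √(1 + w ^ 2)

theorem bubble_nonneg {w : ℝ} (hw : 0 ≤ w) : 0 ≤ bubble w :=
  mul_nonneg (by positivity) (integral_nonneg fun q => by positivity)

theorem cutBubble_nonneg (w : ℝ) : 0 ≤ cutBubble w := by unfold cutBubble; positivity

@[fun_prop]
theorem measurable_bubble : Measurable bubble := by
  have kernel : Measurable (Function.uncurry fun w q : ℝ => 1 / (cosh q ^ 2 + w ^ 2)) := by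
    unfold Function.uncurry; fun_prop
  exact Measurable.mul (by fun_prop)
    (kernel.stronglyMeasurable.integral_prod_right (ν := volume)).measurable

@[fun_prop]
theorem measurable_cutBubble : Measurable cutBubble := by unfold cutBubble; fun_prop

/-- The rate of the Gaussians `t ↦ exp(-(cosh² q / a) t²)` of which `K₀²` is a mixture, as a
function of `(q, a)`. -/
noncomputable def besselRate (x : ℝ × ℝ) : ℝ := cosh x.1 ^ 2 / x.2

/-- The mixing measure `dq ⊗ exp(-a)/a da` on `ℝ × (0, ∞)`: integrating `exp(-besselRate · t²)`
against it gives `2 K₀(t)²`. -/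
noncomputable def besselMixture : Measure (ℝ × ℝ) :=
  (volume.restrict (univ ×ˢ Ioi (0 : ℝ))).withDensity fun x => ofReal (exp (-x.2) / x.2)

instance sFinite_besselMixture : SFinite besselMixture := by
  unfold besselMixture; infer_instance

@[fun_prop]
theorem measurable_besselRate : Measurable besselRate := by unfold besselRate; fun_prop

theorem ae_besselRate_pos : ∀ᵐ x ∂besselMixture, 0 < besselRate x := by
  refine (withDensity_absolutelyContinuous _ _).ae_le ?_
  filter_upwards [ae_restrict_mem (MeasurableSet.univ.prod measurableSet_Ioi)] with x hx
  exact div_pos (by positivity) hx.2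

theorem ae_prod_besselRate_pos : ∀ᵐ p ∂besselMixture.prod besselMixture,
    0 < besselRate p.1 ∧ 0 < besselRate p.2 :=
  (Measure.quasiMeasurePreserving_fst.ae ae_besselRate_pos).and
    (Measure.quasiMeasurePreserving_snd.ae ae_besselRate_pos)

theorem lintegral_besselMixture {f : ℝ × ℝ → ENNReal} (hf : Measurable f) :
    ∫⁻ x, f x ∂besselMixture =
      ∫⁻ q : ℝ, ∫⁻ a in Ioi (0 : ℝ), ofReal (exp (-a) / a) * f (q, a) := by
  rw [besselMixture, lintegral_withDensity_eq_lintegral_mul _ (by fun_prop) hf,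
    Measure.volume_eq_prod, ← Measure.prod_restrict, lintegral_prod _ (by fun_prop),
    Measure.restrict_univ]
  rfl

theorem lintegral_exp_neg_besselRate {t : ℝ} (ht : 0 < t) :
    ∫⁻ x, ofReal (exp (-besselRate x * t ^ 2)) ∂besselMixture = 2 * ofReal (K0 t ^ 2) := by
  rw [ofReal_K0_sq_eq_lintegral_gaussian ht, lintegral_besselMixture (by fun_prop)]
  refine lintegral_congr fun q => setLIntegral_congr_fun measurableSet_Ioi fun a ha => ?_
  rw [mem_Ioi] at ha
  simp only [besselRate]
  rw [← ENNReal.ofReal_mul (by positivity), sub_eq_add_neg, Real.exp_add,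
    show -(t ^ 2 * cosh q ^ 2 / a) = -(cosh q ^ 2 / a) * t ^ 2 by ring, div_mul_eq_mul_div]

theorem lintegral_exp_neg_mul_gaussianKernel (c k : ℝ) (hc : 0 < c) :
    ∫⁻ a in Ioi (0 : ℝ), ofReal (exp (-a) / a) * ofReal (gaussianKernel (c ^ 2 / a) k) =
      ofReal (1 / 2 * (1 / (c ^ 2 + (k / 2) ^ 2))) := by
  have rate_pos : 0 < 1 + k ^ 2 / (4 * c ^ 2) := by positivity
  have integrand : ∀ a ∈ Ioi (0 : ℝ),
      ofReal (exp (-a) / a) * ofReal (gaussianKernel (c ^ 2 / a) k) =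
      ofReal (1 / (2 * c ^ 2) * exp (-(1 + k ^ 2 / (4 * c ^ 2)) * a)) := by
    intro a (ha : 0 < a)
    rw [← ENNReal.ofReal_mul (by positivity), gaussianKernel,
      show -(1 + k ^ 2 / (4 * c ^ 2)) * a = -a + -k ^ 2 / (4 * (c ^ 2 / a)) by
        field_simp; ring, Real.exp_add]
    congr 1
    field_simp
  rw [setLIntegral_congr_fun measurableSet_Ioi integrand,
    ← ofReal_integral_eq_lintegral_ofReal ((exp_neg_integrableOn_Ioi 0 rate_pos).const_mul _)
    (ae_of_all _ fun _ => by positivity), integral_const_mul, integral_exp_mul_Ioi (by linarith),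
    mul_zero, Real.exp_zero, neg_div_neg_eq]
  congr 1
  field_simp; ring

theorem lintegral_gaussianKernel_besselRate {k : ℝ} (hk : 0 < k) :
    ∫⁻ x, ofReal (gaussianKernel (besselRate x) k) ∂besselMixture =
      2 * ofReal (bubble (k / 2) / k) := by
  rw [lintegral_besselMixture (by fun_prop)]
  simp_rw [besselRate, lintegral_exp_neg_mul_gaussianKernel _ k (Real.cosh_pos _)]
  rw [← ofReal_integral_eq_lintegral_ofReal
      ((integrable_one_div_cosh_sq_add_sq _).const_mul _) (ae_of_all _ fun _ => by positivity),
    integral_const_mul, ← ENNReal.ofReal_ofNat, ← ENNReal.ofReal_mul zero_le_two, bubble]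
  congr 1
  field_simp

/-! ### The sunrise integral in momentum space -/

/-- The integral `∫₀^∞ I₀(t) K₀(t)⁵ t dt`, as a lower Lebesgue integral. -/
noncomputable def sunriseIntegral : ENNReal := ∫⁻ t in Ioi (0 : ℝ), ofReal (I0 t * K0 t ^ 5 * t)

theorem ofReal_K0_pow_four {t : ℝ} (ht : 0 < t) :
    4 * ofReal (K0 t ^ 4) = ∫⁻ p, ofReal (exp (-(besselRate p.1 + besselRate p.2) * t ^ 2))
      ∂besselMixture.prod besselMixture := by
  simp_rw [neg_add, add_mul, Real.exp_add, ENNReal.ofReal_mul (Real.exp_pos _).le]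
  rw [lintegral_prod_mul (f := fun x => ofReal (exp (-besselRate x * t ^ 2)))
    (g := fun x => ofReal (exp (-besselRate x * t ^ 2))) (by fun_prop) (by fun_prop),
    lintegral_exp_neg_besselRate ht, show K0 t ^ 4 = K0 t ^ 2 * K0 t ^ 2 by ring,
    ENNReal.ofReal_mul (by positivity)]
  ring

theorem four_mul_sunriseIntegral :
    4 * sunriseIntegral = ∫⁻ p, (∫⁻ v in Ioi (0 : ℝ),
      ofReal (gaussianKernel (besselRate p.1 + besselRate p.2) v / √(v ^ 2 + 4)))
      ∂besselMixture.prod besselMixture := by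
  have integrand : ∀ t ∈ Ioi (0 : ℝ), 4 * ofReal (I0 t * K0 t ^ 5 * t) = ∫⁻ p,
      ofReal (I0 t * K0 t * exp (-(besselRate p.1 + besselRate p.2) * t ^ 2) * t)
      ∂besselMixture.prod besselMixture := by
    intro t (ht : 0 < t)
    have prefactor_nonneg : 0 ≤ I0 t * K0 t * t :=
      mul_nonneg (mul_nonneg (I0_nonneg t) (K0_nonneg t)) ht.le
    rw [show I0 t * K0 t ^ 5 * t = I0 t * K0 t * t * K0 t ^ 4 by ring,
      ENNReal.ofReal_mul prefactor_nonneg, mul_left_comm, ofReal_K0_pow_four ht,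
      ← lintegral_const_mul' _ _ ENNReal.ofReal_ne_top]
    refine lintegral_congr fun p => ?_
    rw [← ENNReal.ofReal_mul prefactor_nonneg, mul_right_comm]
  rw [sunriseIntegral, ← lintegral_const_mul' _ _ ENNReal.ofNat_ne_top,
    setLIntegral_congr_fun measurableSet_Ioi integrand, lintegral_lintegral_swap (by fun_prop)]
  refine lintegral_congr_ae ?_
  filter_upwards [ae_prod_besselRate_pos] with p ⟨h₁, h₂⟩
  exact lintegral_I0_mul_K0_mul_gaussian (add_pos h₁ h₂)

theorem lintegral_prod_gaussianKernel_besselRate {k l : ℝ} (hk : 0 < k) (hl : 0 < l) :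
    ∫⁻ p, ofReal (gaussianKernel (besselRate p.1) k) * ofReal (gaussianKernel (besselRate p.2) l)
      ∂besselMixture.prod besselMixture =
      4 * (ofReal (bubble (k / 2) / k) * ofReal (bubble (l / 2) / l)) := by
  rw [lintegral_prod_mul (f := fun x => ofReal (gaussianKernel (besselRate x) k))
    (g := fun x => ofReal (gaussianKernel (besselRate x) l)) (by fun_prop) (by fun_prop),
    lintegral_gaussianKernel_besselRate hk, lintegral_gaussianKernel_besselRate hl]
  ring

theorem lintegral_prod_lintegral_gaussianKernel (v : ℝ) :
    ∫⁻ p, ofReal (2 * π) * ofReal (gaussianKernel (besselRate p.1 + besselRate p.2) v)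
      ∂besselMixture.prod besselMixture =
      4 * ∫⁻ k : ℂ,
          ofReal (bubble (‖k‖ / 2) / ‖k‖) * ofReal (bubble (‖v - k‖ / 2) / ‖v - k‖) := by
  calc _ = ∫⁻ p, (∫⁻ k : ℂ, ofReal (gaussianKernel (besselRate p.1) ‖k‖) *
          ofReal (gaussianKernel (besselRate p.2) ‖v - k‖))
          ∂besselMixture.prod besselMixture := by
        refine lintegral_congr_ae ?_
        filter_upwards [ae_prod_besselRate_pos] with p ⟨h₁, h₂⟩
        rw [lintegral_gaussianKernel_mul_gaussianKernel h₁ h₂]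
    _ = ∫⁻ k : ℂ, ∫⁻ p, ofReal (gaussianKernel (besselRate p.1) ‖k‖) *
          ofReal (gaussianKernel (besselRate p.2) ‖v - k‖) ∂besselMixture.prod besselMixture :=
        lintegral_lintegral_swap (by fun_prop)
    _ = _ := by
        rw [← lintegral_const_mul' _ _ ENNReal.ofNat_ne_top]
        refine lintegral_congr_ae ?_
        filter_upwards [ae_ne_complex 0, ae_ne_complex v] with k hk_zero hk_v
        exact lintegral_prod_gaussianKernel_besselRate (norm_pos_iff.2 hk_zero)
          (norm_pos_iff.2 (sub_ne_zero.2 hk_v.symm))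

theorem two_pi_mul_sunriseIntegral_eq_lintegral_bubble :
    ofReal (2 * π) * sunriseIntegral = ∫⁻ v in Ioi (0 : ℝ), ofReal (1 / √(v ^ 2 + 4)) *
      ∫⁻ k : ℂ, ofReal (bubble (‖k‖ / 2) / ‖k‖) * ofReal (bubble (‖v - k‖ / 2) / ‖v - k‖) := by
  refine (ENNReal.mul_right_inj four_ne_zero ENNReal.ofNat_ne_top).1 ?_
  rw [mul_left_comm, four_mul_sunriseIntegral, lintegral_lintegral_swap (by fun_prop),
    ← lintegral_const_mul' _ _ ENNReal.ofReal_ne_top,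
    ← lintegral_const_mul' _ _ ENNReal.ofNat_ne_top]
  refine lintegral_congr fun v => ?_
  rw [mul_left_comm, ← lintegral_prod_lintegral_gaussianKernel,
    ← lintegral_const_mul' _ _ ENNReal.ofReal_ne_top,
    ← lintegral_const_mul' _ _ ENNReal.ofReal_ne_top]
  refine lintegral_congr fun p => ?_
  rw [mul_left_comm, ← ENNReal.ofReal_mul (p := 1 / √(v ^ 2 + 4)) (by positivity),
    one_div_mul_eq_div]

/-! ### Integrals over triangles in the plane -/

/-- The integral over all triangles in the plane, with side vectors `v`, `k`, `v - k`, of a product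
of functions of the side lengths, each divided by its argument. -/
noncomputable def planarTriangleIntegral (f g h : ℝ → ENNReal) : ENNReal :=
  ∫⁻ v : ℂ, ∫⁻ k : ℂ, ofReal (1 / (‖v‖ * ‖k‖ * ‖v - k‖)) * (f ‖v‖ * g ‖k‖ * h ‖v - k‖)

/-- The `planarTriangleIntegral` modulo rotations: the first side is a positive real `R`, and `z` is
the shape of the triangle. -/
noncomputable def triangleIntegral (f g h : ℝ → ENNReal) : ENNReal :=
  ∫⁻ z : ℂ, ∫⁻ R in Ioi (0 : ℝ),
    ofReal (1 / (‖z‖ * ‖1 - z‖)) * (f R * g (R * ‖z‖) * h (R * ‖1 - z‖))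

section TriangleIntegral

variable {f g h : ℝ → ENNReal}

theorem planarTriangleIntegral_eq (hf : Measurable f) (hg : Measurable g) (hh : Measurable h) :
    planarTriangleIntegral f g h = ofReal (2 * π) * triangleIntegral f g h := by
  have rescale : ∀ᵐ v : ℂ,
      ∫⁻ k : ℂ, ofReal (1 / (‖v‖ * ‖k‖ * ‖v - k‖)) * (f ‖v‖ * g ‖k‖ * h ‖v - k‖) =
      ∫⁻ z : ℂ, ofReal (1 / ‖v‖) * (ofReal (1 / (‖z‖ * ‖1 - z‖)) *
          (f ‖v‖ * g (‖v‖ * ‖z‖) * h (‖v‖ * ‖1 - z‖))) := by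
    filter_upwards [ae_ne_complex 0] with v hv
    have norm_ne : ‖v‖ ≠ 0 := norm_ne_zero_iff.2 hv
    rw [lintegral_complex_norm_norm_sub hv
      fun a b => ofReal (1 / (‖v‖ * a * b)) * (f ‖v‖ * g a * h b)]
    refine lintegral_congr fun z => ?_
    rw [← mul_assoc, ← mul_assoc (ofReal (1 / ‖v‖)), ← ENNReal.ofReal_mul (by positivity),
      ← ENNReal.ofReal_mul (by positivity)]
    congr 2
    rw [show ‖v‖ * (‖v‖ * ‖z‖) * (‖v‖ * ‖1 - z‖) = ‖v‖ ^ 3 * (‖z‖ * ‖1 - z‖) by ring,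
      one_div_mul_eq_div, ← one_div_mul_one_div]
    field_simp
  rw [planarTriangleIntegral, triangleIntegral, lintegral_congr_ae rescale,
    lintegral_lintegral_swap (by fun_prop), ← lintegral_const_mul' _ _ ENNReal.ofReal_ne_top]
  refine lintegral_congr fun z => ?_
  rw [lintegral_comp_norm_complex (F := fun r => ofReal (1 / r) *
    (ofReal (1 / (‖z‖ * ‖1 - z‖)) * (f r * g (r * ‖z‖) * h (r * ‖1 - z‖)))) (by fun_prop)]
  congr 1
  refine setLIntegral_congr_fun measurableSet_Ioi fun r (hr : 0 < r) => ?_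
  rw [← mul_assoc, ← ENNReal.ofReal_mul hr.le, mul_one_div_cancel hr.ne', ENNReal.ofReal_one,
    one_mul]

theorem triangleIntegral_swap_left (hf : Measurable f) (hg : Measurable g) (hh : Measurable h) :
    triangleIntegral f g h = triangleIntegral g f h := by
  refine (ENNReal.mul_right_inj (a := ofReal (2 * π)) (by simp [pi_pos]) ENNReal.ofReal_ne_top).1 ?_
  rw [← planarTriangleIntegral_eq hf hg hh, ← planarTriangleIntegral_eq hg hf hh,
    planarTriangleIntegral, lintegral_lintegral_swap (by fun_prop)]
  refine lintegral_congr fun z => lintegral_congr fun k => ?_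
  rw [norm_sub_rev, mul_comm ‖k‖ ‖z‖, mul_comm (f _)]

theorem triangleIntegral_swap_right (hf : Measurable f) (hg : Measurable g) (hh : Measurable h) :
    triangleIntegral f g h = triangleIntegral f h g := by
  refine (ENNReal.mul_right_inj (a := ofReal (2 * π)) (by simp [pi_pos]) ENNReal.ofReal_ne_top).1 ?_
  rw [← planarTriangleIntegral_eq hf hg hh, ← planarTriangleIntegral_eq hf hh hg]
  refine lintegral_congr fun v => ?_
  rw [← lintegral_sub_left_eq_self _ v]
  refine lintegral_congr fun k => ?_
  rw [sub_sub_cancel, mul_right_comm, mul_right_comm (f _)]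

end TriangleIntegral

theorem two_mul_ofReal_one_div_sqrt (R : ℝ) :
    2 * ofReal (1 / √((2 * R) ^ 2 + 4)) = ofReal (cutBubble R) := by
  rw [show (2 * R) ^ 2 + 4 = 2 ^ 2 * (1 + R ^ 2) by ring, Real.sqrt_mul (by positivity),
    Real.sqrt_sq zero_le_two, ← ENNReal.ofReal_ofNat, ← ENNReal.ofReal_mul zero_le_two, cutBubble]
  congr 1
  field_simp

theorem lintegral_bubble_mul_bubble {R : ℝ} (hR : 0 < R) :
    ∫⁻ k : ℂ, ofReal (bubble (‖k‖ / 2) / ‖k‖) *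
        ofReal (bubble (‖(2 * R : ℝ) - k‖ / 2) / ‖(2 * R : ℝ) - k‖) =
      ∫⁻ z : ℂ, ofReal (1 / (‖z‖ * ‖1 - z‖)) *
          (ofReal (bubble (R * ‖z‖)) * ofReal (bubble (R * ‖1 - z‖))) := by
  rw [lintegral_complex_norm_norm_sub (v := (2 * R : ℝ))
    (by exact_mod_cast (mul_pos two_pos hR).ne')
    fun a b => ofReal (bubble (a / 2) / a) * ofReal (bubble (b / 2) / b)]
  refine lintegral_congr fun z => ?_
  have left_nonneg : 0 ≤ bubble (R * ‖z‖) := bubble_nonneg (by positivity)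
  rw [Complex.norm_real, Real.norm_of_nonneg (by positivity),
    show 2 * R * ‖z‖ / 2 = R * ‖z‖ by ring, show 2 * R * ‖1 - z‖ / 2 = R * ‖1 - z‖ by ring,
    ← ENNReal.ofReal_mul (by positivity), ← ENNReal.ofReal_mul left_nonneg,
    ← ENNReal.ofReal_mul (by positivity), ← ENNReal.ofReal_mul (by positivity)]
  congr 1
  simp only [div_eq_mul_inv, mul_inv]
  field_simp

theorem two_pi_mul_sunriseIntegral_eq_triangleIntegral :
    ofReal (2 * π) * sunriseIntegral = triangleIntegral (fun w => ofReal (cutBubble w))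
      (fun w => ofReal (bubble w)) (fun w => ofReal (bubble w)) := by
  rw [two_pi_mul_sunriseIntegral_eq_lintegral_bubble, lintegral_Ioi_comp_two_mul,
    ← lintegral_const_mul' _ _ ENNReal.ofNat_ne_top, triangleIntegral,
    lintegral_lintegral_swap (by fun_prop)]
  refine setLIntegral_congr_fun measurableSet_Ioi fun R (hR : 0 < R) => ?_
  rw [← mul_assoc, two_mul_ofReal_one_div_sqrt, lintegral_bubble_mul_bubble hR,
    ← lintegral_const_mul' _ _ ENNReal.ofReal_ne_top]
  exact lintegral_congr fun z => by ring

/-! ### Contour integration of the complex bubble -/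

section Contour

open Complex (I)

theorem norm_intervalIntegral_le_of_differentiableOn_upperHalfPlane {f : ℂ → ℂ} {C T : ℝ}
    (hf : DifferentiableOn ℂ f {z | 0 ≤ z.im}) (hC : ∀ z : ℂ, 0 ≤ z.im → ‖z‖ ^ 2 * ‖f z‖ ≤ C)
    (hT : 0 < T) : ‖∫ x in (-T)..T, f x‖ ≤ 4 * C / T := by
  have far {z : ℂ} (him : 0 ≤ z.im) (hz : T ≤ ‖z‖) : ‖f z‖ ≤ C / T ^ 2 := by
    rw [le_div_iff₀' (by positivity)]
    exact le_trans (by gcongr) (hC z him)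
  have rectangle := Complex.integral_boundary_rect_eq_zero_of_differentiableOn f ⟨-T, 0⟩ ⟨T, T⟩ <|
    hf.mono fun z hz => (Complex.mem_reProdIm.1 hz).2.1.trans' (by simp [hT.le])
  simp only [Complex.ofReal_zero, zero_mul, add_zero, smul_eq_mul] at rectangle
  have top : ‖∫ x in (-T)..T, f (x + T * I)‖ ≤ C / T ^ 2 * |T - -T| :=
    intervalIntegral.norm_integral_le_of_norm_le_const fun x _ =>
      far (by simp [hT.le]) <|
        (le_abs_self T).trans (by simpa using Complex.abs_im_le_norm (x + T * I))
  have side {S : ℝ} (hS : |S| = T) : ‖∫ y in (0)..T, f (S + y * I)‖ ≤ C / T ^ 2 * |T - 0| := by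
    refine intervalIntegral.norm_integral_le_of_norm_le_const fun y hy => far ?_ ?_
    · rw [uIoc_of_le hT.le] at hy
      simpa using hy.1.le
    · simpa [hS] using Complex.abs_re_le_norm (S + y * I)
  have right := side (abs_of_pos hT)
  have left := side ((abs_neg T).trans (abs_of_pos hT))
  rw [abs_of_pos (by linarith)] at top right left
  calc ‖∫ x in (-T)..T, f x‖
      = ‖(∫ x in (-T)..T, f (x + T * I)) - I * (∫ y in (0)..T, f (T + y * I))
          + I * ∫ y in (0)..T, f ((-T : ℝ) + y * I)‖ := by
        congr 1; linear_combination rectangle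
    _ ≤ C / T ^ 2 * (T - -T) + C / T ^ 2 * (T - 0) + C / T ^ 2 * (T - 0) := by
        refine norm_add_le_of_le (norm_sub_le_of_le top ?_) ?_ <;>
          simpa only [norm_mul, Complex.norm_I, one_mul]
    _ = 4 * C / T := by field_simp; ring

theorem integral_eq_zero_of_differentiableOn_upperHalfPlane {f : ℂ → ℂ} {C : ℝ}
    (hf : DifferentiableOn ℂ f {z | 0 ≤ z.im}) (hC : ∀ z : ℂ, 0 ≤ z.im → ‖z‖ ^ 2 * ‖f z‖ ≤ C) :
    ∫ x : ℝ, f x = 0 := by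
  by_cases hi : Integrable fun x : ℝ => f x
  · refine tendsto_nhds_unique
      (intervalIntegral_tendsto_integral hi tendsto_neg_atTop_atBot tendsto_id) ?_
    refine squeeze_zero_norm' ?_ (tendsto_const_nhds (x := 4 * C).div_atTop tendsto_id)
    filter_upwards [eventually_gt_atTop 0] with T hT
    exact norm_intervalIntegral_le_of_differentiableOn_upperHalfPlane hf hC hT
  · exact integral_undef hi

/-- The integrand of `bubbleAmplitude`. -/
noncomputable def bubbleKernel (c : ℝ) (z : ℂ) : ℂ := 1 / (c - z * I)

/-- The complex bubble, holomorphic in the upper half plane, whose real and imaginary parts on the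
real line are `π cutBubble` and `2 bubble`. -/
noncomputable def bubbleAmplitude (w : ℝ) : ℂ := ∫ q : ℝ, bubbleKernel (cosh q) w

theorem le_norm_ofReal_sub_mul_I (c : ℝ) {z : ℂ} (hz : 0 ≤ z.im) : c ≤ ‖(c : ℂ) - z * I‖ :=
  calc c ≤ ((c : ℂ) - z * I).re := by simpa using hz
    _ ≤ _ := Complex.re_le_norm _

theorem norm_le_norm_ofReal_sub_mul_I {c : ℝ} {z : ℂ} (hc : 0 ≤ c) (hz : 0 ≤ z.im) :
    ‖z‖ ≤ ‖(c : ℂ) - z * I‖ := by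
  rw [← pow_le_pow_iff_left₀ (norm_nonneg _) (norm_nonneg _) two_ne_zero, Complex.sq_norm,
    Complex.sq_norm, Complex.normSq_apply, Complex.normSq_apply]
  simp only [Complex.sub_re, Complex.sub_im, Complex.ofReal_re, Complex.ofReal_im, Complex.mul_I_re,
    Complex.mul_I_im]
  nlinarith [mul_nonneg hc hz]

theorem norm_bubbleKernel_le {c : ℝ} {z : ℂ} (hc : 0 < c) (hz : 0 ≤ z.im) :
    ‖bubbleKernel c z‖ ≤ 1 / c := by
  rw [bubbleKernel, norm_div, norm_one]
  exact one_div_le_one_div_of_le hc (le_norm_ofReal_sub_mul_I c hz)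

theorem norm_mul_norm_bubbleKernel_le {c : ℝ} {z : ℂ} (hc : 0 ≤ c) (hz : 0 ≤ z.im) :
    ‖z‖ * ‖bubbleKernel c z‖ ≤ 1 := by
  rw [bubbleKernel, norm_div, norm_one, mul_one_div]
  exact div_le_one_of_le₀ (norm_le_norm_ofReal_sub_mul_I hc hz) (norm_nonneg _)

theorem differentiableAt_bubbleKernel {c : ℝ} {z : ℂ} (hc : 0 < c) (hz : 0 ≤ z.im) :
    DifferentiableAt ℂ (bubbleKernel c) z := by
  have denominator_ne : (c : ℂ) - z * I ≠ 0 :=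
    norm_pos_iff.1 (hc.trans_le (le_norm_ofReal_sub_mul_I c hz))
  unfold bubbleKernel
  fun_prop (disch := exact denominator_ne)

theorem integral_bubbleKernel_mul_eq_zero {c₁ c₂ c₃ s₁ s₂ s₃ : ℝ} (hc₁ : 0 < c₁) (hc₂ : 0 < c₂)
    (hc₃ : 0 < c₃) (hs₁ : 0 < s₁) (hs₂ : 0 < s₂) (hs₃ : 0 < s₃) :
    ∫ R : ℝ, bubbleKernel c₁ (R * s₁) * (bubbleKernel c₂ (R * s₂) * bubbleKernel c₃ (R * s₃)) =
      0 := by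
  have im_nonneg {s : ℝ} (hs : 0 < s) {z : ℂ} (hz : 0 ≤ z.im) : 0 ≤ (z * s).im := by
    simpa using mul_nonneg hz hs.le
  have differentiable {c s : ℝ} (hc : 0 < c) (hs : 0 < s) :
      DifferentiableOn ℂ (fun z : ℂ => bubbleKernel c (z * s)) {z | 0 ≤ z.im} := fun z hz =>
    ((differentiableAt_bubbleKernel hc (im_nonneg hs hz)).comp (g := bubbleKernel c) z
      (by fun_prop)).differentiableWithinAt
  have decay {c s : ℝ} (hc : 0 < c) (hs : 0 < s) {z : ℂ} (hz : 0 ≤ z.im) :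
      ‖z‖ * ‖bubbleKernel c (z * s)‖ ≤ 1 / s := by
    have bound := norm_mul_norm_bubbleKernel_le hc.le (im_nonneg hs hz)
    rw [norm_mul, Complex.norm_real, Real.norm_of_nonneg hs.le] at bound
    rw [le_div_iff₀ hs]
    linarith
  refine integral_eq_zero_of_differentiableOn_upperHalfPlane (C := 1 / s₁ * (1 / s₂ * (1 / c₃)))
    (f := fun z => bubbleKernel c₁ (z * s₁) * (bubbleKernel c₂ (z * s₂) * bubbleKernel c₃ (z * s₃)))
    ((differentiable hc₁ hs₁).mul ((differentiable hc₂ hs₂).mul (differentiable hc₃ hs₃)))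
    fun z hz => ?_
  calc _ = ‖z‖ * ‖bubbleKernel c₁ (z * s₁)‖ * (‖z‖ * ‖bubbleKernel c₂ (z * s₂)‖ *
        ‖bubbleKernel c₃ (z * s₃)‖) := by rw [norm_mul, norm_mul]; ring
    _ ≤ _ := by
        gcongr
        exacts [decay hc₁ hs₁ hz, decay hc₂ hs₂ hz, norm_bubbleKernel_le hc₃ (im_nonneg hs₃ hz)]

/-- The rate at which `bubbleAmplitude` is bounded on the real line. The true rate is `log w / w`;
the exponent `1/2` is enough for a product of three to be integrable. -/
noncomputable def bubbleDecay (w : ℝ) : ℝ := (1 + w ^ 2) ^ (-(1 : ℝ) / 4)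

@[fun_prop]
theorem measurable_bubbleDecay : Measurable bubbleDecay := by unfold bubbleDecay; fun_prop

theorem bubbleDecay_nonneg (w : ℝ) : 0 ≤ bubbleDecay w := by unfold bubbleDecay; positivity

theorem bubbleDecay_eq (w : ℝ) : bubbleDecay w = 1 / √√(1 + w ^ 2) := by
  rw [bubbleDecay, Real.sqrt_eq_rpow, Real.sqrt_eq_rpow, ← Real.rpow_mul (by positivity), neg_div,
    Real.rpow_neg (by positivity)]
  norm_num

theorem norm_bubbleKernel_ofReal_le {c : ℝ} (hc : 1 ≤ c) (w : ℝ) :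
    ‖bubbleKernel c w‖ ≤ 1 / √c * bubbleDecay w := by
  have norm_sq : ‖(c : ℂ) - w * I‖ ^ 2 = c ^ 2 + w ^ 2 := by
    rw [Complex.sq_norm, Complex.normSq_apply]; simp; ring
  rw [bubbleKernel, norm_div, norm_one, bubbleDecay_eq, one_div_mul_one_div,
    ← Real.sqrt_mul (by positivity)]
  refine one_div_le_one_div_of_le (by positivity) ?_
  rw [Real.sqrt_le_left (norm_nonneg _), norm_sq]
  refine le_of_sq_le_sq ?_ (by positivity)
  rw [mul_pow, Real.sq_sqrt (by positivity)]
  nlinarith [mul_nonneg (sq_nonneg c) (sq_nonneg w), sq_nonneg (w ^ 2),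
    mul_nonneg (sq_nonneg c) (by nlinarith : 0 ≤ c ^ 2 - 1)]

theorem exists_bubbleDecay_mul_le {s : ℝ} (hs : 0 < s) :
    ∃ C, 0 ≤ C ∧ ∀ R, bubbleDecay (R * s) ≤ C * bubbleDecay R := by
  have : 0 < min 1 s := lt_min one_pos hs
  refine ⟨((min 1 s) ^ 2) ^ (-(1 : ℝ) / 4), by positivity, fun R => ?_⟩
  unfold bubbleDecay
  rw [← Real.mul_rpow (by positivity) (by positivity)]
  apply Real.rpow_le_rpow_of_nonpos (by positivity) _ (by norm_num)
  have le_one : (min 1 s) ^ 2 ≤ 1 ^ 2 := by gcongr; exact min_le_left _ _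
  have le_sq : (min 1 s) ^ 2 ≤ s ^ 2 := by gcongr; exact min_le_right _ _
  nlinarith [sq_nonneg R]

theorem bubbleDecay_pow_three (R : ℝ) : bubbleDecay R ^ 3 = (1 + ‖R‖ ^ 2) ^ (-(3 / 2 : ℝ) / 2) := by
  rw [bubbleDecay, ← Real.rpow_natCast, ← Real.rpow_mul (by positivity), Real.norm_eq_abs, sq_abs]
  norm_num

theorem measurable_bubbleKernel_cosh : Measurable fun p : ℝ × ℂ => bubbleKernel (cosh p.1) p.2 := by
  unfold bubbleKernel; fun_prop

theorem integrable_bubbleKernel_cosh (w : ℝ) :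
    Integrable fun q : ℝ => bubbleKernel (cosh q) w :=
  (integrable_one_div_sqrt_cosh.mul_const _).mono'
    (measurable_bubbleKernel_cosh.comp (by fun_prop : Measurable fun q : ℝ => (q, (w : ℂ)))
      ).aestronglyMeasurable
    (ae_of_all _ fun q => norm_bubbleKernel_ofReal_le (Real.one_le_cosh q) w)

theorem norm_bubbleAmplitude_le (w : ℝ) :
    ‖bubbleAmplitude w‖ ≤ (∫ q : ℝ, 1 / √(cosh q)) * bubbleDecay w := by
  rw [← integral_mul_const]
  exact norm_integral_le_of_norm_le (integrable_one_div_sqrt_cosh.mul_const _)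
    (ae_of_all _ fun q => norm_bubbleKernel_ofReal_le (Real.one_le_cosh q) w)

theorem bubbleKernel_ofReal {c : ℝ} (hc : 0 < c) (w : ℝ) :
    bubbleKernel c w = (c / (c ^ 2 + w ^ 2) : ℝ) + (w * (1 / (c ^ 2 + w ^ 2)) : ℝ) * I := by
  have norm_sq_ne : c ^ 2 + w ^ 2 ≠ 0 := by positivity
  have factor : (c ^ 2 + w ^ 2 : ℂ) = (c - w * I) * (c + w * I) := by
    linear_combination (w : ℂ) ^ 2 * Complex.I_sq
  have norm_sq_ne' : (c ^ 2 + w ^ 2 : ℂ) ≠ 0 := by exact_mod_cast norm_sq_ne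
  rw [bubbleKernel, div_eq_iff (left_ne_zero_of_mul (factor ▸ norm_sq_ne'))]
  push_cast
  field_simp
  linear_combination factor

theorem integrable_cosh_div_cosh_sq_add_sq (w : ℝ) :
    Integrable fun q : ℝ => cosh q / (cosh q ^ 2 + w ^ 2) := by
  refine (integrable_bubbleKernel_cosh w).re.congr (ae_of_all _ fun q => ?_)
  simp only [RCLike.re_eq_complex_re, bubbleKernel_ofReal (Real.cosh_pos q), Complex.add_re,
    Complex.ofReal_re, Complex.re_ofReal_mul, Complex.I_re, mul_zero, add_zero]

theorem integral_cosh_div_cosh_sq_add_sq (w : ℝ) :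
    ∫ q : ℝ, cosh q / (cosh q ^ 2 + w ^ 2) = π * cutBubble w := by
  set s := √(1 + w ^ 2) with hs
  have s_pos : 0 < s := by positivity
  have s_sq : s ^ 2 = 1 + w ^ 2 := Real.sq_sqrt (by positivity)
  have primitive (q : ℝ) : HasDerivAt (fun q => arctan (sinh q / s) / s)
      (cosh q / (cosh q ^ 2 + w ^ 2)) q := by
    refine HasDerivAt.congr_deriv ((((Real.hasDerivAt_sinh q).div_const _).arctan).div_const _) ?_
    rw [show cosh q ^ 2 + w ^ 2 = s ^ 2 + sinh q ^ 2 by rw [s_sq, Real.cosh_sq]; ring]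
    field_simp
  have at_top : Tendsto (fun q => arctan (sinh q / s) / s) atTop (𝓝 (π / 2 / s)) :=
    ((tendsto_nhds_of_tendsto_nhdsWithin tendsto_arctan_atTop).comp
      (Real.sinhOrderIso.tendsto_atTop.atTop_div_const s_pos)).div_const _
  have at_bot : Tendsto (fun q => arctan (sinh q / s) / s) atBot (𝓝 (-(π / 2) / s)) :=
    ((tendsto_nhds_of_tendsto_nhdsWithin tendsto_arctan_atBot).comp
      (Real.sinhOrderIso.tendsto_atBot.atBot_div_const s_pos)).div_const _
  rw [integral_of_hasDerivAt_of_tendsto primitive (integrable_cosh_div_cosh_sq_add_sq w)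
    at_bot at_top, cutBubble, ← hs]
  ring

theorem bubbleAmplitude_eq (w : ℝ) :
    bubbleAmplitude w = (π * cutBubble w : ℝ) + (2 * bubble w : ℝ) * I := by
  have im_part : 2 * bubble w = ∫ q : ℝ, w * (1 / (cosh q ^ 2 + w ^ 2)) := by
    rw [integral_const_mul, bubble]; ring
  rw [im_part, ← integral_cosh_div_cosh_sq_add_sq, ← integral_complex_ofReal,
    ← integral_complex_ofReal, ← integral_mul_const, ← integral_add
      (integrable_cosh_div_cosh_sq_add_sq w).ofReal
      (((integrable_one_div_cosh_sq_add_sq w).const_mul w).ofReal.mul_const _)]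
  exact integral_congr_ae (ae_of_all _ fun q => bubbleKernel_ofReal (Real.cosh_pos q) w)

@[fun_prop]
theorem measurable_bubbleAmplitude : Measurable bubbleAmplitude := by
  rw [show bubbleAmplitude = _ from funext bubbleAmplitude_eq]
  fun_prop

theorem bubble_neg (w : ℝ) : bubble (-w) = -bubble w := by
  simp only [bubble, neg_sq, neg_div, neg_mul]

theorem cutBubble_neg (w : ℝ) : cutBubble (-w) = cutBubble w := by simp only [cutBubble, neg_sq]

theorem pi_mul_cutBubble_le_norm_bubbleAmplitude (w : ℝ) :
    π * cutBubble w ≤ ‖bubbleAmplitude w‖ := by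
  refine le_trans ?_ (Complex.re_le_norm _)
  simp [bubbleAmplitude_eq]

/-- The product of three bubbles with all of them cut. -/
noncomputable def tripleCut (w₁ w₂ w₃ : ℝ) : ℝ := cutBubble w₁ * cutBubble w₂ * cutBubble w₃

/-- The sum, over the choice of one bubble to be cut, of the products of three bubbles. -/
noncomputable def singleCut (w₁ w₂ w₃ : ℝ) : ℝ :=
  cutBubble w₁ * bubble w₂ * bubble w₃ + bubble w₁ * cutBubble w₂ * bubble w₃ +
    bubble w₁ * bubble w₂ * cutBubble w₃

theorem tripleCut_nonneg (w₁ w₂ w₃ : ℝ) : 0 ≤ tripleCut w₁ w₂ w₃ :=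
  mul_nonneg (mul_nonneg (cutBubble_nonneg _) (cutBubble_nonneg _)) (cutBubble_nonneg _)

theorem singleCut_nonneg {w₁ w₂ w₃ : ℝ} (h₁ : 0 ≤ w₁) (h₂ : 0 ≤ w₂) (h₃ : 0 ≤ w₃) :
    0 ≤ singleCut w₁ w₂ w₃ := by
  have := cutBubble_nonneg w₁
  have := cutBubble_nonneg w₂
  have := cutBubble_nonneg w₃
  have := bubble_nonneg h₁
  have := bubble_nonneg h₂
  have := bubble_nonneg h₃
  unfold singleCut
  positivity

theorem re_bubbleAmplitude_mul (w₁ w₂ w₃ : ℝ) :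
    (bubbleAmplitude w₁ * (bubbleAmplitude w₂ * bubbleAmplitude w₃)).re =
      4 * π * (π ^ 2 / 4 * tripleCut w₁ w₂ w₃ - singleCut w₁ w₂ w₃) := by
  simp only [bubbleAmplitude_eq, Complex.mul_re, Complex.mul_im, Complex.add_re, Complex.add_im,
    Complex.ofReal_re, Complex.ofReal_im, Complex.I_re, Complex.I_im, tripleCut, singleCut]
  ring

section Scales

variable {s₁ s₂ s₃ : ℝ}

theorem integrable_bubbleDecay_mul (hs₁ : 0 < s₁) (hs₂ : 0 < s₂) (hs₃ : 0 < s₃) :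
    Integrable fun R => bubbleDecay (R * s₁) * (bubbleDecay (R * s₂) * bubbleDecay (R * s₃)) := by
  obtain ⟨C₁, hC₁, le₁⟩ := exists_bubbleDecay_mul_le hs₁
  obtain ⟨C₂, hC₂, le₂⟩ := exists_bubbleDecay_mul_le hs₂
  obtain ⟨C₃, -, le₃⟩ := exists_bubbleDecay_mul_le hs₃
  have japanese : Integrable fun R : ℝ => (1 + ‖R‖ ^ 2) ^ (-(3 / 2 : ℝ) / 2) :=
    integrable_rpow_neg_one_add_norm_sq (by simp; norm_num)
  refine (japanese.const_mul (C₁ * (C₂ * C₃))).mono'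
    (Measurable.aestronglyMeasurable (by fun_prop)) (ae_of_all _ fun R => ?_)
  have nonneg := bubbleDecay_nonneg
  rw [Real.norm_of_nonneg (mul_nonneg (nonneg _) (mul_nonneg (nonneg _) (nonneg _))),
    ← bubbleDecay_pow_three]
  calc _ ≤ C₁ * bubbleDecay R * (C₂ * bubbleDecay R * (C₃ * bubbleDecay R)) := by
        gcongr
        exacts [mul_nonneg (nonneg _) (nonneg _), mul_nonneg hC₁ (nonneg _), le₁ R, nonneg _,
          mul_nonneg hC₂ (nonneg _), le₂ R, le₃ R]
    _ = _ := by ring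

theorem integrable_bubbleAmplitude_mul (hs₁ : 0 < s₁) (hs₂ : 0 < s₂) (hs₃ : 0 < s₃) :
    Integrable fun R : ℝ =>
      bubbleAmplitude (R * s₁) * (bubbleAmplitude (R * s₂) * bubbleAmplitude (R * s₃)) := by
  set C := ∫ q : ℝ, 1 / √(cosh q)
  refine ((integrable_bubbleDecay_mul hs₁ hs₂ hs₃).const_mul (C * (C * C))).mono'
    (Measurable.aestronglyMeasurable (by fun_prop)) (ae_of_all _ fun R => ?_)
  have bound := norm_bubbleAmplitude_le
  have bound_nonneg (w : ℝ) : 0 ≤ C * bubbleDecay w := (norm_nonneg _).trans (bound w)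
  rw [norm_mul, norm_mul]
  calc _ ≤ C * bubbleDecay (R * s₁) * (C * bubbleDecay (R * s₂) * (C * bubbleDecay (R * s₃))) := by
        gcongr
        exacts [bound_nonneg _, bound _, bound_nonneg _, bound _, bound _]
    _ = _ := by ring

theorem integrable_tripleCut (hs₁ : 0 < s₁) (hs₂ : 0 < s₂) (hs₃ : 0 < s₃) :
    Integrable fun R : ℝ => tripleCut (R * s₁) (R * s₂) (R * s₃) := by
  refine ((integrable_bubbleAmplitude_mul hs₁ hs₂ hs₃).norm.const_mul (1 / π ^ 3)).mono'
    (Measurable.aestronglyMeasurable (by unfold tripleCut; fun_prop)) (ae_of_all _ fun R => ?_)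
  have nonneg (w : ℝ) : 0 ≤ π * cutBubble w := mul_nonneg pi_pos.le (cutBubble_nonneg w)
  have bound := pi_mul_cutBubble_le_norm_bubbleAmplitude
  rw [Real.norm_of_nonneg (tripleCut_nonneg _ _ _), norm_mul, norm_mul, one_div_mul_eq_div,
    le_div_iff₀ (by positivity)]
  calc _ = π * cutBubble (R * s₁) * (π * cutBubble (R * s₂) * (π * cutBubble (R * s₃))) := by
        rw [tripleCut]; ring
    _ ≤ _ := by
        gcongr
        exacts [mul_nonneg (nonneg _) (nonneg _), bound _, nonneg _, bound _, bound _]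

theorem integrable_prod_bubbleKernel_mul (hs₁ : 0 < s₁) (hs₂ : 0 < s₂) (hs₃ : 0 < s₃) :
    Integrable (fun p : ℝ × ℝ × ℝ × ℝ => bubbleKernel (cosh p.2.1) (p.1 * s₁) *
      (bubbleKernel (cosh p.2.2.1) (p.1 * s₂) * bubbleKernel (cosh p.2.2.2) (p.1 * s₃))) := by
  have majorant := (integrable_bubbleDecay_mul hs₁ hs₂ hs₃).mul_prod
    (integrable_one_div_sqrt_cosh.mul_prod
      (integrable_one_div_sqrt_cosh.mul_prod integrable_one_div_sqrt_cosh))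
  refine majorant.mono' (Measurable.aestronglyMeasurable (by unfold bubbleKernel; fun_prop))
    (ae_of_all _ fun ⟨R, q₁, q₂, q₃⟩ => ?_)
  have bound (q s : ℝ) :
      ‖bubbleKernel (cosh q) (R * s)‖ ≤ 1 / √(cosh q) * bubbleDecay (R * s) := by
    exact_mod_cast norm_bubbleKernel_ofReal_le (Real.one_le_cosh q) (R * s)
  have bound_nonneg (q s : ℝ) : 0 ≤ 1 / √(cosh q) * bubbleDecay (R * s) :=
    (norm_nonneg _).trans (bound q s)
  rw [norm_mul, norm_mul]
  calc _ ≤ 1 / √(cosh q₁) * bubbleDecay (R * s₁) * (1 / √(cosh q₂) * bubbleDecay (R * s₂) *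
        (1 / √(cosh q₃) * bubbleDecay (R * s₃))) := by
        gcongr
        exacts [bound_nonneg _ _, bound _ _, bound_nonneg _ _, bound _ _, bound _ _]
    _ = _ := by ring

theorem integral_bubbleAmplitude_mul_eq_zero (hs₁ : 0 < s₁) (hs₂ : 0 < s₂) (hs₃ : 0 < s₃) :
    ∫ R : ℝ,
      bubbleAmplitude (R * s₁) * (bubbleAmplitude (R * s₂) * bubbleAmplitude (R * s₃)) = 0 := by
  have product (R : ℝ) :
      bubbleAmplitude (R * s₁) * (bubbleAmplitude (R * s₂) * bubbleAmplitude (R * s₃)) =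
      ∫ q : ℝ × ℝ × ℝ, bubbleKernel (cosh q.1) (R * s₁) *
        (bubbleKernel (cosh q.2.1) (R * s₂) * bubbleKernel (cosh q.2.2) (R * s₃)) := by
    unfold bubbleAmplitude
    rw [Measure.volume_eq_prod, Measure.volume_eq_prod, ← integral_prod_mul, ← integral_prod_mul]
    push_cast
    rfl
  simp_rw [product]
  rw [integral_integral_swap (integrable_prod_bubbleKernel_mul hs₁ hs₂ hs₃)]
  simp_rw [integral_bubbleKernel_mul_eq_zero (Real.cosh_pos _) (Real.cosh_pos _) (Real.cosh_pos _)
    hs₁ hs₂ hs₃, integral_zero]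

theorem integrable_tripleCut_sub_singleCut (hs₁ : 0 < s₁) (hs₂ : 0 < s₂) (hs₃ : 0 < s₃) :
    Integrable fun R : ℝ =>
      π ^ 2 / 4 * tripleCut (R * s₁) (R * s₂) (R * s₃) - singleCut (R * s₁) (R * s₂) (R * s₃) := by
  refine ((integrable_bubbleAmplitude_mul hs₁ hs₂ hs₃).re.div_const (4 * π)).congr
    (ae_of_all _ fun R => ?_)
  simp only [RCLike.re_eq_complex_re, re_bubbleAmplitude_mul]
  field_simp

theorem integral_Ioi_tripleCut_sub_singleCut (hs₁ : 0 < s₁) (hs₂ : 0 < s₂) (hs₃ : 0 < s₃) :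
    ∫ R in Ioi (0 : ℝ),
      (π ^ 2 / 4 * tripleCut (R * s₁) (R * s₂) (R * s₃) - singleCut (R * s₁) (R * s₂) (R * s₃)) =
      0 := by
  set P : ℝ → ℝ := fun R =>
    π ^ 2 / 4 * tripleCut (R * s₁) (R * s₂) (R * s₃) - singleCut (R * s₁) (R * s₂) (R * s₃) with hP
  have even (R : ℝ) : P |R| = P R := by
    rcases abs_choice R with h | h <;> rw [h]
    simp only [hP, tripleCut, singleCut, neg_mul, bubble_neg, cutBubble_neg]
    ring
  have re_part : 4 * π * ∫ R, P R = 0 := by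
    rw [← integral_const_mul]
    simp only [hP, ← re_bubbleAmplitude_mul]
    exact (integral_re (integrable_bubbleAmplitude_mul hs₁ hs₂ hs₃)).trans
      (by rw [integral_bubbleAmplitude_mul_eq_zero hs₁ hs₂ hs₃, map_zero])
  have folded := integral_comp_abs (f := P)
  simp only [even] at folded
  rw [folded] at re_part
  simpa [pi_ne_zero] using re_part

theorem lintegral_singleCut (hs₁ : 0 < s₁) (hs₂ : 0 < s₂) (hs₃ : 0 < s₃) :
    ∫⁻ R in Ioi (0 : ℝ), ofReal (singleCut (R * s₁) (R * s₂) (R * s₃)) =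
      ofReal (π ^ 2 / 4) * ∫⁻ R in Ioi (0 : ℝ),
          ofReal (tripleCut (R * s₁) (R * s₂) (R * s₃)) := by
  have triple := (integrable_tripleCut hs₁ hs₂ hs₃).const_mul (π ^ 2 / 4)
  have single : Integrable fun R : ℝ => singleCut (R * s₁) (R * s₂) (R * s₃) := by
    simpa only [Pi.sub_def, sub_sub_cancel] using
      triple.sub (integrable_tripleCut_sub_singleCut hs₁ hs₂ hs₃)
  have eq_integral : ∫ R in Ioi (0 : ℝ), singleCut (R * s₁) (R * s₂) (R * s₃) =
      ∫ R in Ioi (0 : ℝ), π ^ 2 / 4 * tripleCut (R * s₁) (R * s₂) (R * s₃) := by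
    have difference := integral_Ioi_tripleCut_sub_singleCut hs₁ hs₂ hs₃
    rw [integral_sub triple.integrableOn single.integrableOn, sub_eq_zero] at difference
    exact difference.symm
  have single_nonneg : ∀ᵐ R ∂volume.restrict (Ioi (0 : ℝ)),
      0 ≤ singleCut (R * s₁) (R * s₂) (R * s₃) := by
    filter_upwards [ae_restrict_mem measurableSet_Ioi] with R (hR : 0 < R)
    exact singleCut_nonneg (by positivity) (by positivity) (by positivity)
  rw [← ofReal_integral_eq_lintegral_ofReal single.integrableOn single_nonneg, eq_integral,
    ofReal_integral_eq_lintegral_ofReal triple.integrableOn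
      (ae_of_all _ fun R => mul_nonneg (by positivity) (tripleCut_nonneg _ _ _)),
    ← lintegral_const_mul' _ _ ENNReal.ofReal_ne_top]
  simp_rw [ENNReal.ofReal_mul (by positivity : 0 ≤ π ^ 2 / 4)]

end Scales

end Contour

@[fun_prop]
theorem measurable_triangleIntegrand {f g h : ℝ → ENNReal} (hf : Measurable f) (hg : Measurable g)
    (hh : Measurable h) : Measurable fun z : ℂ => ∫⁻ R in Ioi (0 : ℝ),
      ofReal (1 / (‖z‖ * ‖1 - z‖)) * (f R * g (R * ‖z‖) * h (R * ‖1 - z‖)) :=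
  Measurable.lintegral_prod_right' (f := fun p : ℂ × ℝ =>
    ofReal (1 / (‖p.1‖ * ‖1 - p.1‖)) * (f p.2 * g (p.2 * ‖p.1‖) * h (p.2 * ‖1 - p.1‖)))
    (by fun_prop)

theorem ofReal_singleCut {w₁ w₂ w₃ : ℝ} (h₁ : 0 ≤ w₁) (h₂ : 0 ≤ w₂) (h₃ : 0 ≤ w₃) :
    ofReal (singleCut w₁ w₂ w₃) = ofReal (cutBubble w₁) * ofReal (bubble w₂) * ofReal (bubble w₃) +
      ofReal (bubble w₁) * ofReal (cutBubble w₂) * ofReal (bubble w₃) +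
      ofReal (bubble w₁) * ofReal (bubble w₂) * ofReal (cutBubble w₃) := by
  have := cutBubble_nonneg w₁
  have := cutBubble_nonneg w₂
  have := cutBubble_nonneg w₃
  have := bubble_nonneg h₁
  have := bubble_nonneg h₂
  have := bubble_nonneg h₃
  rw [singleCut, ENNReal.ofReal_add, ENNReal.ofReal_add]
  · simp only [ENNReal.ofReal_mul, mul_nonneg, *]
  all_goals positivity

theorem ofReal_tripleCut (w₁ w₂ w₃ : ℝ) : ofReal (tripleCut w₁ w₂ w₃) =
    ofReal (cutBubble w₁) * ofReal (cutBubble w₂) * ofReal (cutBubble w₃) := by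
  rw [tripleCut, ENNReal.ofReal_mul (mul_nonneg (cutBubble_nonneg _) (cutBubble_nonneg _)),
    ENNReal.ofReal_mul (cutBubble_nonneg _)]

theorem sum_triangleIntegral_singleCut :
    triangleIntegral (fun w => ofReal (cutBubble w)) (fun w => ofReal (bubble w))
        (fun w => ofReal (bubble w)) +
      triangleIntegral (fun w => ofReal (bubble w)) (fun w => ofReal (cutBubble w))
        (fun w => ofReal (bubble w)) +
      triangleIntegral (fun w => ofReal (bubble w)) (fun w => ofReal (bubble w))
        (fun w => ofReal (cutBubble w)) =
      ofReal (π ^ 2 / 4) * triangleIntegral (fun w => ofReal (cutBubble w))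
        (fun w => ofReal (cutBubble w)) (fun w => ofReal (cutBubble w)) := by
  unfold triangleIntegral
  rw [← lintegral_const_mul' _ _ ENNReal.ofReal_ne_top, ← lintegral_add_left (by fun_prop),
    ← lintegral_add_left (by fun_prop)]
  refine lintegral_congr_ae ?_
  filter_upwards [ae_ne_complex 0, ae_ne_complex 1] with z hz_zero hz_one
  have sum_rule := lintegral_singleCut one_pos (norm_pos_iff.2 hz_zero)
    (norm_pos_iff.2 (sub_ne_zero.2 hz_one.symm))
  simp_rw [lintegral_const_mul' _ _ ENNReal.ofReal_ne_top]
  rw [← mul_add, ← mul_add, mul_left_comm, ← lintegral_add_left (by fun_prop),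
    ← lintegral_add_left (by fun_prop)]
  simp only [mul_one, ofReal_tripleCut] at sum_rule
  rw [← sum_rule]
  congr 1
  refine setLIntegral_congr_fun measurableSet_Ioi fun R (hR : 0 < R) => ?_
  exact (ofReal_singleCut hR.le (by positivity) (by positivity)).symm

theorem twenty_four_mul_sunriseIntegral : 24 * sunriseIntegral = ofReal π * triangleIntegral
    (fun w => ofReal (cutBubble w)) (fun w => ofReal (cutBubble w))
    (fun w => ofReal (cutBubble w)) := by
  have sum_rule := sum_triangleIntegral_singleCut
  rw [triangleIntegral_swap_right (by fun_prop) (by fun_prop) (by fun_prop) (f := fun w =>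
      ofReal (bubble w)) (g := fun w => ofReal (bubble w)) (h := fun w => ofReal (cutBubble w)),
    triangleIntegral_swap_left (by fun_prop) (by fun_prop) (by fun_prop) (f := fun w =>
      ofReal (bubble w)) (g := fun w => ofReal (cutBubble w)) (h := fun w => ofReal (bubble w)),
    ← two_pi_mul_sunriseIntegral_eq_triangleIntegral] at sum_rule
  refine (ENNReal.mul_right_inj (a := ofReal (π / 4)) (by simp [pi_pos]) ENNReal.ofReal_ne_top).1 ?_
  rw [← mul_assoc, ← mul_assoc, ← ENNReal.ofReal_mul (by positivity), ← ENNReal.ofReal_ofNat,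
    ← ENNReal.ofReal_mul (by positivity), show π / 4 * π = π ^ 2 / 4 by ring, ← sum_rule, ← add_mul,
    ← add_mul, ← ENNReal.ofReal_add (by positivity) (by positivity),
    ← ENNReal.ofReal_add (by positivity) (by positivity)]
  congr 2
  ring

/-! ### Elementary angular and algebraic integrals -/

theorem lintegral_one_div_mul_cos_sq_add_mul_sin_sq {X Y : ℝ} (hX : 0 < X) (hY : 0 < Y) :
    ∫⁻ ψ in Ioo 0 (π / 2), ofReal (1 / (X * cos ψ ^ 2 + Y * sin ψ ^ 2)) =
      ofReal (π / (2 * √(X * Y))) := by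
  have mapsTo {c : ℝ} (hc : 0 < c) :
      MapsTo (fun ψ => arctan (c * tan ψ)) (Ioo 0 (π / 2)) (Ioo 0 (π / 2)) := fun ψ hψ =>
    ⟨arctan_pos.2 (mul_pos hc (tan_pos_of_pos_of_lt_pi_div_two hψ.1 hψ.2)), arctan_lt_pi_div_two _⟩
  have leftInv {c d : ℝ} (hcd : d * c = 1) :
      LeftInvOn (fun ψ => arctan (d * tan ψ)) (fun ψ => arctan (c * tan ψ)) (Ioo 0 (π / 2)) :=
    fun ψ hψ => by
      simp only [tan_arctan, ← mul_assoc, hcd, one_mul]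
      exact arctan_tan (by linarith [hψ.1, pi_pos]) hψ.2
  have cos_pos {ψ : ℝ} (hψ : ψ ∈ Ioo 0 (π / 2)) : 0 < cos ψ :=
    cos_pos_of_mem_Ioo ⟨by linarith [hψ.1, pi_pos], hψ.2⟩
  rw [← setLIntegral_ofReal_eq_of_bijOn (f := fun ψ => arctan (√Y / √X * tan ψ))
    (G := fun _ => 1 / √(X * Y)) measurableSet_Ioo
    (fun ψ hψ => ((hasDerivAt_tan (cos_pos hψ).ne').const_mul _).arctan)
    (InvOn.bijOn (f' := fun ψ => arctan (√X / √Y * tan ψ))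
      ⟨leftInv (by field_simp), leftInv (by field_simp)⟩
      (mapsTo (by positivity)) (mapsTo (by positivity))) fun ψ hψ => ?_]
  · rw [setLIntegral_const, Real.volume_Ioo, ← ENNReal.ofReal_mul (by positivity)]
    congr 1
    ring
  · have := cos_pos hψ
    rw [abs_of_pos (by positivity), tan_eq_sin_div_cos, Real.sqrt_mul hX.le]
    conv_rhs => rw [← Real.sq_sqrt hX.le, ← Real.sq_sqrt hY.le]
    field_simp

theorem lintegral_Ioo_ofReal_of_even {G : ℝ → ℝ} (hG : ∀ x, G (-x) = G x) (a : ℝ) :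
    ∫⁻ x in Ioo (-a) a, ofReal (G x) = 2 * ∫⁻ x in Ioo 0 a, ofReal (G x) := by
  have indicator_even (x : ℝ) : (Ioo (-a) a).indicator G (-x) = (Ioo (-a) a).indicator G x := by
    simp only [indicator, mem_Ioo, hG, neg_lt_neg_iff, neg_lt, and_comm]
  have inter_eq : Ioo (-a) a ∩ Ioi 0 = Ioo 0 a := by
    ext x
    simp only [mem_inter_iff, mem_Ioo, mem_Ioi]
    constructor <;> intro hx <;> refine ⟨?_, ?_⟩ <;> grind
  have ofReal_indicator (x : ℝ) : ofReal ((Ioo (-a) a).indicator G x) =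
      (Ioo (-a) a).indicator (fun x => ofReal (G x)) x :=
    (congrFun (indicator_comp_of_zero ENNReal.ofReal_zero) x).symm
  have halves := lintegral_ofReal_of_even indicator_even
  simp only [ofReal_indicator] at halves
  rwa [lintegral_indicator measurableSet_Ioo, lintegral_indicator measurableSet_Ioo,
    Measure.restrict_restrict measurableSet_Ioo, inter_eq] at halves

theorem lintegral_one_div_sub_mul_cos {U V : ℝ} (hsub : 0 < U - V) (hadd : 0 < U + V) :
    ∫⁻ θ in Ioo (-π) π, ofReal (1 / (U - V * cos θ)) = ofReal (2 * π / √(U ^ 2 - V ^ 2)) := by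
  have half_angle : ∫⁻ θ in Ioo 0 π, ofReal (1 / (U - V * cos θ)) = ∫⁻ ψ in Ioo 0 (π / 2),
      ofReal (2 * (1 / ((U - V) * cos ψ ^ 2 + (U + V) * sin ψ ^ 2))) := by
    refine setLIntegral_ofReal_eq_of_bijOn (f := fun ψ => 2 * ψ) (f' := fun _ => 2)
      measurableSet_Ioo (fun ψ _ => by simpa using (hasDerivAt_id ψ).const_mul 2)
      (InvOn.bijOn (f' := fun θ => θ / 2) ⟨fun ψ _ => by ring, fun θ _ => by ring⟩
        (fun ψ hψ => ⟨by linarith [hψ.1], by linarith [hψ.2]⟩)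
        fun θ hθ => ⟨by linarith [hθ.1], by linarith [hθ.2]⟩) fun ψ _ => ?_
    rw [abs_two, cos_two_mul, sin_sq]
    congr 2
    ring
  rw [lintegral_Ioo_ofReal_of_even (by simp), half_angle]
  simp_rw [ENNReal.ofReal_mul zero_le_two]
  rw [lintegral_const_mul' _ _ ENNReal.ofReal_ne_top,
    lintegral_one_div_mul_cos_sq_add_mul_sin_sq hsub hadd, ← ENNReal.ofReal_ofNat,
    ← ENNReal.ofReal_mul zero_le_two, ← ENNReal.ofReal_mul zero_le_two,
    show (U - V) * (U + V) = U ^ 2 - V ^ 2 by ring]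
  congr 1
  ring

/-- The positive root of the quadratic equation `a * x ^ 2 + b * x = c` with `0 < a` and `0 < c`. -/
noncomputable def posRoot (a b c : ℝ) : ℝ := (√(b ^ 2 + 4 * a * c) - b) / (2 * a)

theorem posRoot_pos {a b c : ℝ} (ha : 0 < a) (hc : 0 < c) : 0 < posRoot a b c := by
  have : b < √(b ^ 2 + 4 * a * c) :=
    Real.lt_sqrt_of_sq_lt (lt_add_of_pos_right _ (by positivity))
  exact div_pos (sub_pos.2 this) (by positivity)

theorem two_mul_mul_posRoot_add {a : ℝ} (ha : a ≠ 0) (b c : ℝ) :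
    2 * a * posRoot a b c + b = √(b ^ 2 + 4 * a * c) := by
  rw [posRoot, mul_div_cancel₀ _ (mul_ne_zero two_ne_zero ha), sub_add_cancel]

theorem eq_posRoot_iff {a b c x : ℝ} (ha : 0 < a) (hc : 0 < c) (hx : 0 < x) :
    x = posRoot a b c ↔ a * x ^ 2 + b * x = c := by
  have root_iff : x = posRoot a b c ↔ √(b ^ 2 + 4 * a * c) = 2 * a * x + b := by
    rw [posRoot, eq_div_iff (by positivity), eq_sub_iff_add_eq, eq_comm, mul_comm x]
  rw [root_iff]
  constructor <;> intro h
  · have sq_eq := Real.sq_sqrt (show 0 ≤ b ^ 2 + 4 * a * c by positivity)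
    rw [h] at sq_eq
    refine mul_left_cancel₀ (show 4 * a ≠ 0 by positivity) ?_
    linear_combination sq_eq
  · have : 0 < a * x + b := pos_of_mul_pos_left (b := x) (by linarith) hx.le
    rw [show b ^ 2 + 4 * a * c = (2 * a * x + b) ^ 2 by rw [← h]; ring, Real.sqrt_sq]
    nlinarith [mul_pos ha hx]

theorem hasDerivAt_posRoot {a b c : ℝ → ℝ} {a' b' c' r : ℝ} (ha' : HasDerivAt a a' r)
    (hb' : HasDerivAt b b' r) (hc' : HasDerivAt c c' r) (ha : 0 < a r) (hc : 0 < c r) :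
    HasDerivAt (fun r => posRoot (a r) (b r) (c r))
      (-(a' * posRoot (a r) (b r) (c r) ^ 2 + b' * posRoot (a r) (b r) (c r) - c')
        / √(b r ^ 2 + 4 * a r * c r)) r := by
  have discrim_pos : 0 < b r ^ 2 + 4 * a r * c r := by positivity
  have root_deriv := ((((hb'.pow 2).add ((ha'.const_mul 4).mul hc')).sqrt discrim_pos.ne').sub
    hb').div (ha'.const_mul 2) (by positivity)
  refine root_deriv.congr_deriv ?_
  have sq_eq := Real.sq_sqrt discrim_pos.le
  have := Real.sqrt_pos.2 discrim_pos
  simp only [posRoot, Pi.add_apply, Pi.pow_apply, Pi.mul_apply, Pi.sub_apply]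
  set S := √(b r ^ 2 + 4 * a r * c r)
  field_simp
  push_cast
  linear_combination -a' * sq_eq

theorem deriv_mul_sq_add_deriv_mul_sub_deriv {a b c : ℝ → ℝ} {r N A B C : ℝ}
    (ha' : DifferentiableAt ℝ a r) (hb' : DifferentiableAt ℝ b r) (hc' : DifferentiableAt ℝ c r)
    (h : ∀ s, a s * N ^ 2 + b s * N - c s = A * s ^ 2 + B * s - C) :
    deriv a r * N ^ 2 + deriv b r * N - deriv c r = 2 * A * r + B := by
  have deriv_left := ((ha'.hasDerivAt.mul_const (N ^ 2)).add
    (hb'.hasDerivAt.mul_const N)).sub hc'.hasDerivAt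
  have deriv_right := ((((hasDerivAt_id r).pow 2).const_mul A).add
    ((hasDerivAt_id r).const_mul B)).sub_const C
  refine (deriv_left.unique (deriv_right.congr_of_eventuallyEq (.of_forall h))).trans ?_
  simp only [Nat.cast_ofNat, id_eq, Nat.add_one_sub_one, pow_one, mul_one, add_left_inj]
  ring

/-- The curve `a r * N ^ 2 + b r * N = c r` is quadratic in each variable.  On it the partial
derivatives of the defining polynomial are the square roots of its two discriminants, so
`dN / √(disc in r) = -dr / √(disc in N)` (Euler). -/
theorem lintegral_one_div_sqrt_discrim_comm {a b c A B C : ℝ → ℝ}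
    (ha' : Differentiable ℝ a) (hb' : Differentiable ℝ b) (hc' : Differentiable ℝ c)
    (ha : ∀ r, 0 < r → 0 < a r) (hc : ∀ r, 0 < r → 0 < c r)
    (hA : ∀ N, 0 < N → 0 < A N) (hC : ∀ N, 0 < N → 0 < C N)
    (h : ∀ r N, a r * N ^ 2 + b r * N - c r = A N * r ^ 2 + B N * r - C N) :
    ∫⁻ N in Ioi (0 : ℝ), ofReal (1 / √(B N ^ 2 + 4 * A N * C N)) =
      ∫⁻ r in Ioi (0 : ℝ), ofReal (1 / √(b r ^ 2 + 4 * a r * c r)) := by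
  have root_comm {r N : ℝ} (hr : 0 < r) (hN : 0 < N) :
      N = posRoot (a r) (b r) (c r) ↔ r = posRoot (A N) (B N) (C N) := by
    rw [eq_posRoot_iff (ha r hr) (hc r hr) hN, eq_posRoot_iff (hA N hN) (hC N hN) hr,
      ← sub_eq_zero, h, sub_eq_zero]
  refine setLIntegral_ofReal_eq_of_bijOn (f := fun r => posRoot (a r) (b r) (c r))
    measurableSet_Ioi
    (fun r hr => hasDerivAt_posRoot (ha' r).hasDerivAt (hb' r).hasDerivAt (hc' r).hasDerivAt
      (ha r hr) (hc r hr))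
    (InvOn.bijOn (f' := fun N => posRoot (A N) (B N) (C N))
      ⟨fun r hr => ((root_comm hr (posRoot_pos (ha r hr) (hc r hr))).1 rfl).symm,
        fun N hN => ((root_comm (posRoot_pos (hA N hN) (hC N hN)) hN).2 rfl).symm⟩
      (fun r hr => posRoot_pos (ha r hr) (hc r hr))
      fun N hN => posRoot_pos (hA N hN) (hC N hN)) fun r (hr : 0 < r) => ?_
  set N := posRoot (a r) (b r) (c r) with hN
  have N_pos : 0 < N := posRoot_pos (ha r hr) (hc r hr)
  have partial_deriv : deriv a r * N ^ 2 + deriv b r * N - deriv c r =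
      √(B N ^ 2 + 4 * A N * C N) := by
    rw [deriv_mul_sq_add_deriv_mul_sub_deriv (ha' r) (hb' r) (hc' r) (h · N),
      (root_comm hr N_pos).1 hN]
    exact two_mul_mul_posRoot_add (hA N N_pos).ne' _ _
  have : 0 < √(B N ^ 2 + 4 * A N * C N) := by
    have := hA N N_pos
    have := hC N N_pos
    positivity
  have : 0 < √(b r ^ 2 + 4 * a r * c r) := by
    have := ha r hr
    have := hc r hr
    positivity
  rw [partial_deriv, abs_div, abs_neg, abs_of_pos ‹_›, abs_of_pos ‹_›]
  field_simp

/-! ### Feynman parameters for the cut triangle -/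

theorem lintegral_cutBubble_mul_mul (A B : ℝ) :
    ∫⁻ R in Ioi (0 : ℝ),
        ofReal (cutBubble R) * ofReal (cutBubble (R * A)) * ofReal (cutBubble (R * B)) =
      ∫⁻ e in Ioo (0 : ℝ) 1,
        ofReal (1 / (2 * √e * √((1 - e + e * A ^ 2) * (1 - e + e * B ^ 2)))) := by
  have pos {e : ℝ} (he : e ∈ Ioo (0 : ℝ) 1) : 0 < e / (1 - e) :=
    div_pos he.1 (sub_pos.2 he.2)
  simp_rw [← ofReal_tripleCut]
  refine setLIntegral_ofReal_eq_of_bijOn (f := fun e => √(e / (1 - e)))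
    (f' := fun e => 1 / (1 - e) ^ 2 / (2 * √(e / (1 - e)))) measurableSet_Ioo
    (fun e he => ?_) (InvOn.bijOn (f' := fun R => R ^ 2 / (1 + R ^ 2)) ⟨fun e he => ?_,
      fun R (hR : 0 < R) => ?_⟩ (fun e he => Real.sqrt_pos.2 (pos he)) fun R (hR : 0 < R) => ?_)
    fun e he => ?_
  · have : 0 < 1 - e := sub_pos.2 he.2
    refine HasDerivAt.sqrt (((hasDerivAt_id e).div ((hasDerivAt_id e).const_sub 1)
      this.ne').congr_deriv ?_) (pos he).ne'
    simp only [id]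
    field_simp
    ring
  · have : 0 < 1 - e := sub_pos.2 he.2
    simp only [Real.sq_sqrt (pos he).le]
    field_simp
    ring
  · have : R ^ 2 / (1 + R ^ 2) / (1 - R ^ 2 / (1 + R ^ 2)) = R ^ 2 := by
      rw [one_sub_div (by positivity), add_sub_cancel_right]
      field_simp
    simp only [this, Real.sqrt_sq hR.le]
  · exact ⟨by positivity, (div_lt_one (by positivity)).2 (by linarith)⟩
  · have := he.1
    have one_sub_pos : 0 < 1 - e := sub_pos.2 he.2
    have cut_eq (A : ℝ) : cutBubble (√(e / (1 - e)) * A) = √(1 - e) / √(1 - e + e * A ^ 2) := by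
      rw [cutBubble, mul_pow, Real.sq_sqrt (pos he).le,
        show 1 + e / (1 - e) * A ^ 2 = (1 - e + e * A ^ 2) / (1 - e) by field_simp,
        Real.sqrt_div (by positivity), one_div_div]
    have cut_one_eq : cutBubble √(e / (1 - e)) = √(1 - e) := by simpa using cut_eq 1
    have := Real.sqrt_pos.2 one_sub_pos
    rw [abs_of_pos (by positivity), tripleCut, cut_eq, cut_eq, cut_one_eq,
      Real.sqrt_mul (by positivity), Real.sqrt_div he.1.le,
      show (1 - e) ^ 2 = √(1 - e) ^ 4 by rw [pow_mul _ 2 2, Real.sq_sqrt one_sub_pos.le]]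
    field_simp

theorem ofReal_mul_lintegral_cutBubble_mul_mul {A B : ℝ} (hA : 0 < A) (hB : 0 < B) :
    ofReal (1 / (A * B)) * ∫⁻ R in Ioi (0 : ℝ),
        ofReal (cutBubble R) * ofReal (cutBubble (R * A)) * ofReal (cutBubble (R * B)) =
      ofReal (1 / π) * ∫⁻ e in Ioo (0 : ℝ) 1, ∫⁻ ψ in Ioo 0 (π / 2), ofReal (1 / √e) *
        ofReal (1 / (e * A ^ 2 * B ^ 2 + (1 - e) * (B ^ 2 * cos ψ ^ 2 + A ^ 2 * sin ψ ^ 2))) := by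
  rw [lintegral_cutBubble_mul_mul, ← lintegral_const_mul' _ _ ENNReal.ofReal_ne_top,
    ← lintegral_const_mul' _ _ ENNReal.ofReal_ne_top]
  refine setLIntegral_congr_fun measurableSet_Ioo fun e he => ?_
  have := he.1
  have : 0 < 1 - e := sub_pos.2 he.2
  have denom_eq (ψ : ℝ) :
      e * A ^ 2 * B ^ 2 + (1 - e) * (B ^ 2 * cos ψ ^ 2 + A ^ 2 * sin ψ ^ 2) =
        B ^ 2 * (1 - e + e * A ^ 2) * cos ψ ^ 2 + A ^ 2 * (1 - e + e * B ^ 2) * sin ψ ^ 2 := by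
    rw [cos_sq' ψ]
    ring
  simp_rw [denom_eq]
  rw [lintegral_const_mul' _ _ ENNReal.ofReal_ne_top,
    lintegral_one_div_mul_cos_sq_add_mul_sin_sq (by positivity) (by positivity),
    ← ENNReal.ofReal_mul (by positivity), ← ENNReal.ofReal_mul (by positivity),
    ← ENNReal.ofReal_mul (by positivity),
    show B ^ 2 * (1 - e + e * A ^ 2) * (A ^ 2 * (1 - e + e * B ^ 2)) =
      (A * B) ^ 2 * ((1 - e + e * A ^ 2) * (1 - e + e * B ^ 2)) by ring,
    Real.sqrt_mul (x := (A * B) ^ 2) (by positivity), Real.sqrt_sq (by positivity)]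
  congr 1
  field_simp

/-- The discriminant left by the angular integral over the plane; `x₁`, `x₃` are two of three
Feynman parameters summing to `1`, and `r` is the squared modulus of the point. -/
def angularDiscrim (x₁ x₃ r : ℝ) : ℝ := (x₁ + r + x₃ * r ^ 2) ^ 2 - 4 * r * (x₁ + x₃ * r) ^ 2

theorem norm_one_sub_ofReal_mul_cos_add_sin_mul_I_sq (r θ : ℝ) :
    ‖(1 - r * (cos θ + sin θ * Complex.I) : ℂ)‖ ^ 2 = 1 + r ^ 2 - 2 * r * cos θ := by
  rw [← Complex.normSq_eq_norm_sq, Complex.normSq_apply]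
  simp only [Complex.sub_re, Complex.sub_im, Complex.mul_re, Complex.mul_im, Complex.add_re,
    Complex.add_im, Complex.ofReal_re, Complex.ofReal_im, Complex.one_re, Complex.one_im,
    Complex.I_re, Complex.I_im]
  linear_combination r ^ 2 * sin_sq_add_cos_sq θ

/-- The elliptic integral to which the planar integral reduces; it depends on the Feynman
parameters only through their product `p`. -/
noncomputable def ellipticIntegral (p : ℝ) : ENNReal :=
  ∫⁻ N in Ioi (0 : ℝ), ofReal (1 / √(N ^ 2 * (N + 1) ^ 2 + 4 * p * N))

section FeynmanSimplex

variable {x₁ x₂ x₃ : ℝ}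

theorem lintegral_polar_one_div_feynman
    (h₁ : 0 < x₁) (h₂ : 0 < x₂) (h₃ : 0 < x₃) (hsum : x₁ + x₂ + x₃ = 1) {r : ℝ} (hr : 0 < r) :
    ∫⁻ θ in Ioo (-π) π, ofReal (1 / (x₃ * ‖(r * (cos θ + sin θ * Complex.I) : ℂ)‖ ^ 2 *
        ‖(1 - r * (cos θ + sin θ * Complex.I) : ℂ)‖ ^ 2
        + (x₁ * ‖(1 - r * (cos θ + sin θ * Complex.I) : ℂ)‖ ^ 2
          + x₂ * ‖(r * (cos θ + sin θ * Complex.I) : ℂ)‖ ^ 2))) =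
      ofReal (2 * π / √(angularDiscrim x₁ x₃ (r ^ 2))) := by
  obtain rfl : x₂ = 1 - x₁ - x₃ := by linarith
  have denom_eq (θ : ℝ) : x₃ * r ^ 2 * (1 + r ^ 2 - 2 * r * cos θ)
      + (x₁ * (1 + r ^ 2 - 2 * r * cos θ) + (1 - x₁ - x₃) * r ^ 2) =
      x₁ + r ^ 2 + x₃ * (r ^ 2) ^ 2 - 2 * r * (x₁ + x₃ * r ^ 2) * cos θ := by ring
  have sub_pos : 0 < x₁ + r ^ 2 + x₃ * (r ^ 2) ^ 2 - 2 * r * (x₁ + x₃ * r ^ 2) := calc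
    0 < x₁ * (1 - r) ^ 2 + (1 - x₁ - x₃) * r ^ 2 + x₃ * r ^ 2 * (1 - r) ^ 2 := by positivity
    _ = _ := by ring
  simp only [norm_ofReal_mul_cos_add_sin_mul_I hr.le, norm_one_sub_ofReal_mul_cos_add_sin_mul_I_sq,
    denom_eq]
  rw [lintegral_one_div_sub_mul_cos sub_pos (by positivity), angularDiscrim]
  congr 4
  ring

theorem lintegral_complex_one_div_feynman
    (h₁ : 0 < x₁) (h₂ : 0 < x₂) (h₃ : 0 < x₃) (hsum : x₁ + x₂ + x₃ = 1) :
    ∫⁻ z : ℂ, ofReal (1 / (x₃ * ‖z‖ ^ 2 * ‖1 - z‖ ^ 2 + (x₁ * ‖1 - z‖ ^ 2 + x₂ * ‖z‖ ^ 2))) =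
      ofReal π * ∫⁻ r in Ioi (0 : ℝ), ofReal (1 / √(angularDiscrim x₁ x₃ r)) := by
  have sq_bijOn : BijOn (fun r : ℝ => r ^ 2) (Ioi 0) (Ioi 0) :=
    InvOn.bijOn (f' := fun r => √r) ⟨fun r hr => Real.sqrt_sq (le_of_lt hr),
      fun r hr => Real.sq_sqrt (le_of_lt hr)⟩ (fun r (hr : 0 < r) => pow_pos hr 2)
      fun r hr => Real.sqrt_pos.2 hr
  rw [setLIntegral_ofReal_eq_of_bijOn measurableSet_Ioi
      (fun r _ => by simpa using hasDerivAt_pow 2 r) sq_bijOn (fun _ _ => rfl),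
    lintegral_complex_polar (by fun_prop), ← lintegral_const_mul' _ _ ENNReal.ofReal_ne_top]
  refine setLIntegral_congr_fun measurableSet_Ioi fun r (hr : 0 < r) => ?_
  rw [lintegral_const_mul' _ _ ENNReal.ofReal_ne_top,
    lintegral_polar_one_div_feynman h₁ h₂ h₃ hsum hr, ← ENNReal.ofReal_mul hr.le,
    ← ENNReal.ofReal_mul pi_pos.le, abs_of_pos (by positivity)]
  congr 1
  ring

theorem lintegral_one_div_sqrt_angularDiscrim
    (h₁ : 0 < x₁) (h₂ : 0 < x₂) (h₃ : 0 < x₃) (hsum : x₁ + x₂ + x₃ = 1) :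
    ∫⁻ r in Ioi (0 : ℝ), ofReal (1 / √(angularDiscrim x₁ x₃ r)) =
      ellipticIntegral (x₁ * x₂ * x₃) := by
  have comm := lintegral_one_div_sqrt_discrim_comm
    (a := fun r => r * (x₁ + x₃ * r) / x₁) (b := fun r => x₃ * r ^ 2 + (1 - 2 * x₃) * r - x₁)
    (c := fun _ => x₁ * x₂) (A := fun N => x₃ * N * (N + x₁) / x₁)
    (B := fun N => N * (N + 1 - 2 * x₃)) (C := fun N => x₁ * (N + x₂))
    (by fun_prop) (by fun_prop) (by fun_prop) (fun r hr => by positivity)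
    (fun r _ => by positivity) (fun N hN => by positivity) (fun N hN => by positivity)
    (fun r N => by field_simp; ring)
  obtain rfl : x₂ = 1 - x₁ - x₃ := by linarith
  refine Eq.trans ?_ (comm.symm.trans ?_)
  · refine lintegral_congr fun r => ?_
    congr 3
    rw [angularDiscrim]
    field_simp
    ring
  · refine lintegral_congr fun N => ?_
    congr 3
    field_simp
    ring

theorem lintegral_complex_one_div_feynman_eq_ellipticIntegral
    (h₁ : 0 < x₁) (h₂ : 0 < x₂) (h₃ : 0 < x₃) (hsum : x₁ + x₂ + x₃ = 1) :
    ∫⁻ z : ℂ, ofReal (1 / (x₃ * ‖z‖ ^ 2 * ‖1 - z‖ ^ 2 + (x₁ * ‖1 - z‖ ^ 2 + x₂ * ‖z‖ ^ 2))) =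
      ofReal π * ellipticIntegral (x₁ * x₂ * x₃) := by
  rw [lintegral_complex_one_div_feynman h₁ h₂ h₃ hsum,
    lintegral_one_div_sqrt_angularDiscrim h₁ h₂ h₃ hsum]

end FeynmanSimplex

/-! ### Rising factorials and the binomial series -/

theorem ris_zero (a : ℝ) : ris a 0 = 1 := Finset.prod_range_zero _

theorem ris_succ (a : ℝ) (n : ℕ) : ris a (n + 1) = ris a n * (a + n) :=
  Finset.prod_range_succ _ n

theorem ris_pos {a : ℝ} (ha : 0 < a) (n : ℕ) : 0 < ris a n :=
  Finset.prod_pos fun _ _ => by positivity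

theorem ris_one (n : ℕ) : ris 1 n = n.factorial := by
  induction n with
  | zero => simp [ris_zero]
  | succ n ih => rw [ris_succ, ih, Nat.factorial_succ]; push_cast; ring

theorem ascPochhammer_eval_eq_ris (a : ℝ) (n : ℕ) : (ascPochhammer ℝ n).eval a = ris a n := by
  induction n with
  | zero => simp [ris_zero]
  | succ n ih => rw [ascPochhammer_succ_eval, ih, ris_succ]

theorem ringChoose_add_sub_one_eq_ris_div_factorial (a : ℝ) (n : ℕ) :
    Ring.choose (a + n - 1) n = ris a n / n.factorial := by
  rw [Ring.choose_eq_smul, Polynomial.descPochhammer_smeval_eq_ascPochhammer,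
    show a + n - 1 - n + 1 = a by ring, Polynomial.ascPochhammer_smeval_eq_eval,
    ascPochhammer_eval_eq_ris, smul_eq_mul, div_eq_inv_mul]

theorem hasSum_ris_div_factorial_mul_pow (a : ℝ) {x : ℝ} (hx : |x| < 1) :
    HasSum (fun n => ris a n / n.factorial * x ^ n) (1 / (1 - x) ^ a) := by
  have hasSum_choose := (Real.one_div_one_sub_rpow_hasFPowerSeriesOnBall_zero a).hasSum (y := x)
    (by rw [Metric.mem_eball, edist_zero_right, ← ofReal_norm, Real.norm_eq_abs]; simpa using hx)
  simpa only [zero_add, FormalMultilinearSeries.ofScalars_apply_eq, smul_eq_mul,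
    ringChoose_add_sub_one_eq_ris_div_factorial] using hasSum_choose

/-! ### The series `₂F₁(1/3, 2/3; 1 | x)` -/

/-- The Taylor coefficients of `₂F₁(1/3, 2/3; 1 | x)`. -/
noncomputable def hypCoeff (n : ℕ) : ℝ := ris (1 / 3) n * ris (2 / 3) n / (n.factorial : ℝ) ^ 2

theorem hypCoeff_zero : hypCoeff 0 = 1 := by simp [hypCoeff, ris_zero]

theorem hypCoeff_succ (n : ℕ) :
    hypCoeff (n + 1) = hypCoeff n * ((n + 1 / 3) * (n + 2 / 3) / (n + 1) ^ 2) := by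
  simp only [hypCoeff, ris_succ, Nat.factorial_succ]
  push_cast
  field_simp
  ring

theorem hypCoeff_pos (n : ℕ) : 0 < hypCoeff n := by
  have := ris_pos (show (0 : ℝ) < 1 / 3 by norm_num) n
  have := ris_pos (show (0 : ℝ) < 2 / 3 by norm_num) n
  unfold hypCoeff
  positivity

theorem hypCoeff_le (n : ℕ) : hypCoeff n ≤ 1 / (n + 1) := by
  induction n with
  | zero => simp [hypCoeff_zero]
  | succ n ih =>
    rw [hypCoeff_succ]
    refine (mul_le_mul_of_nonneg_right ih (by positivity)).trans ?_
    push_cast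
    rw [div_mul_div_comm, div_le_div_iff₀ (by positivity) (by positivity)]
    have cast_nonneg : (0 : ℝ) ≤ n := n.cast_nonneg
    nlinarith [mul_nonneg cast_nonneg cast_nonneg, pow_nonneg cast_nonneg 3]

/-- The series `₂F₁(1/3, 2/3; 1 | x)` for `0 ≤ x`, summed in `[0, ∞]` so that it may be integrated
termwise without convergence conditions. -/
noncomputable def hypSeries (x : ℝ) : ENNReal := ∑' k, ofReal (hypCoeff k) * ofReal (x ^ k)

@[fun_prop]
theorem measurable_hypSeries : Measurable hypSeries := by
  unfold hypSeries
  fun_prop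

/-! ### Hyperbolic integrals -/

theorem cosh_three_mul_eq_mul_sinh_sq (α : ℝ) :
    cosh (3 * α) = cosh α * (1 + 4 * sinh α ^ 2) := by
  rw [Real.cosh_three_mul, Real.sinh_sq]; ring

theorem hasDerivAt_tanh (x : ℝ) : HasDerivAt tanh (1 / cosh x ^ 2) x := by
  rw [show tanh = fun x => sinh x / cosh x from funext Real.tanh_eq_sinh_div_cosh]
  refine ((Real.hasDerivAt_sinh x).div (Real.hasDerivAt_cosh x)
    (Real.cosh_pos x).ne').congr_deriv ?_
  rw [← sq, ← sq, Real.cosh_sq_sub_sinh_sq]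

theorem one_sub_tanh (x : ℝ) : 1 - tanh x = exp (-x) / cosh x := by
  have := Real.cosh_pos x
  rw [Real.tanh_eq_sinh_div_cosh, ← Real.cosh_sub_sinh]
  field_simp

theorem tendsto_tanh_atTop : Tendsto tanh atTop (𝓝 1) := by
  have gap_tendsto : Tendsto (fun x => 1 - tanh x) atTop (𝓝 0) := by
    refine squeeze_zero (fun x => sub_nonneg.2 (Real.tanh_lt_one x).le) (fun x => ?_)
      Real.tendsto_exp_neg_atTop_nhds_zero
    rw [one_sub_tanh]
    exact div_le_self (exp_pos _).le (Real.one_le_cosh x)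
  simpa using gap_tendsto.const_sub 1

theorem tendsto_inv_one_add_sq_atTop : Tendsto (fun x : ℝ => (1 + x ^ 2)⁻¹) atTop (𝓝 0) :=
  (tendsto_atTop_add_const_left _ _ (tendsto_pow_atTop two_ne_zero)).inv_tendsto_atTop

theorem continuous_cosh_div_cosh_three_mul_pow (n : ℕ) :
    Continuous fun α => cosh α / cosh (3 * α) ^ n :=
  Continuous.div (by fun_prop) (by fun_prop) fun _ => (pow_pos (Real.cosh_pos _) _).ne'

theorem cosh_div_cosh_three_mul_pow_nonneg (n : ℕ) (α : ℝ) : 0 ≤ cosh α / cosh (3 * α) ^ n :=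
  div_nonneg (Real.cosh_pos _).le (pow_nonneg (Real.cosh_pos _).le _)

theorem cosh_div_cosh_three_mul_pow_succ_le (n : ℕ) (α : ℝ) :
    cosh α / cosh (3 * α) ^ (n + 1) ≤ (1 + α ^ 2)⁻¹ := by
  have := Real.cosh_pos α
  have cosh_le_pow : cosh (3 * α) ≤ cosh (3 * α) ^ (n + 1) :=
    le_self_pow₀ (Real.one_le_cosh _) n.succ_ne_zero
  calc cosh α / cosh (3 * α) ^ (n + 1) ≤ cosh α / cosh (3 * α) := by
        gcongr
    _ = (1 + 4 * sinh α ^ 2)⁻¹ := by rw [cosh_three_mul_eq_mul_sinh_sq]; field_simp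
    _ ≤ (1 + α ^ 2)⁻¹ := by
        gcongr
        linarith [sq_le_sinh_sq α, sq_nonneg α]

theorem integrable_cosh_div_cosh_three_mul_pow_succ (n : ℕ) :
    Integrable fun α => cosh α / cosh (3 * α) ^ (n + 1) := by
  refine integrable_inv_one_add_sq.mono'
    (continuous_cosh_div_cosh_three_mul_pow _).aestronglyMeasurable (ae_of_all _ fun α => ?_)
  rw [Real.norm_of_nonneg (cosh_div_cosh_three_mul_pow_nonneg _ _)]
  exact cosh_div_cosh_three_mul_pow_succ_le n α

/-- The primitive that relates the exponents `n + 1` and `n + 3` in `∫ cosh α / cosh (3 α) ^ n`. -/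
noncomputable def coshPowPrimitive (n : ℕ) (α : ℝ) : ℝ :=
  sinh α / cosh (3 * α) ^ (n + 1) +
    3 * (n + 1) * cosh α * sinh (3 * α) / cosh (3 * α) ^ (n + 2)

theorem hasDerivAt_coshPowPrimitive (n : ℕ) (α : ℝ) :
    HasDerivAt (coshPowPrimitive n)
      ((1 - 9 * (n + 1 : ℝ) ^ 2) * (cosh α / cosh (3 * α) ^ (n + 1)) +
        9 * (n + 1) * (n + 2) * (cosh α / cosh (3 * α) ^ (n + 3))) α := by
  have pos := Real.cosh_pos (3 * α)
  have linear : HasDerivAt (fun α : ℝ => 3 * α) 3 α := by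
    simpa using (hasDerivAt_id α).const_mul (3 : ℝ)
  refine HasDerivAt.congr_deriv
    (((Real.hasDerivAt_sinh α).div (linear.cosh.pow (n + 1)) (pow_pos pos _).ne').add
      ((((Real.hasDerivAt_cosh α).const_mul (3 * ((n : ℝ) + 1))).mul linear.sinh).div
        (linear.cosh.pow (n + 2)) (pow_pos pos _).ne')) ?_
  have sinh_sq : sinh (3 * α) ^ 2 = cosh (3 * α) ^ 2 - 1 := Real.sinh_sq _
  simp only [Pi.pow_apply, Pi.mul_apply, Nat.add_sub_cancel, show n + 2 - 1 = n + 1 from rfl]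
  push_cast
  generalize cosh (3 * α) = C, sinh (3 * α) = S at pos sinh_sq ⊢
  field_simp
  ring_nf
  simp only [sinh_sq]
  ring

theorem coshPowPrimitive_nonneg (n : ℕ) {α : ℝ} (hα : 0 ≤ α) : 0 ≤ coshPowPrimitive n α := by
  have := Real.cosh_pos (3 * α)
  have := Real.cosh_pos α
  have := Real.sinh_nonneg_iff.2 hα
  have : 0 ≤ sinh (3 * α) := Real.sinh_nonneg_iff.2 (by positivity)
  unfold coshPowPrimitive
  positivity

theorem coshPowPrimitive_le (n : ℕ) (α : ℝ) :
    coshPowPrimitive n α ≤ (1 + 3 * (n + 1)) * (1 + α ^ 2)⁻¹ := by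
  have := Real.cosh_pos (3 * α)
  have := Real.cosh_pos α
  calc coshPowPrimitive n α
      ≤ cosh α / cosh (3 * α) ^ (n + 1) +
          3 * (n + 1) * cosh α * cosh (3 * α) / cosh (3 * α) ^ (n + 2) := by
        unfold coshPowPrimitive
        gcongr
        · exact (Real.sinh_lt_cosh α).le
        · exact (Real.sinh_lt_cosh _).le
    _ = (1 + 3 * (n + 1)) * (cosh α / cosh (3 * α) ^ (n + 1)) := by field_simp; ring
    _ ≤ (1 + 3 * (n + 1)) * (1 + α ^ 2)⁻¹ := by
        gcongr
        exact cosh_div_cosh_three_mul_pow_succ_le n α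

theorem tendsto_coshPowPrimitive_atTop (n : ℕ) :
    Tendsto (coshPowPrimitive n) atTop (𝓝 0) := by
  refine squeeze_zero' ((eventually_ge_atTop 0).mono fun _ => coshPowPrimitive_nonneg n)
    (Eventually.of_forall (coshPowPrimitive_le n)) ?_
  simpa using tendsto_inv_one_add_sq_atTop.const_mul (1 + 3 * (n + 1 : ℝ))

theorem integral_cosh_div_cosh_three_mul_pow_recurrence (n : ℕ) :
    (9 * (n + 1 : ℝ) ^ 2 - 1) * ∫ α in Ioi (0 : ℝ), cosh α / cosh (3 * α) ^ (n + 1) =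
      9 * (n + 1) * (n + 2) * ∫ α in Ioi (0 : ℝ), cosh α / cosh (3 * α) ^ (n + 3) := by
  have integrable_low :=
    (integrable_cosh_div_cosh_three_mul_pow_succ n).integrableOn (s := Ioi (0 : ℝ))
  have integrable_high :=
    (integrable_cosh_div_cosh_three_mul_pow_succ (n + 2)).integrableOn (s := Ioi (0 : ℝ))
  have ftc := integral_Ioi_of_hasDerivAt_of_tendsto'
    (fun α _ => hasDerivAt_coshPowPrimitive n α)
    ((integrable_low.const_mul _).add (integrable_high.const_mul _))
    (tendsto_coshPowPrimitive_atTop n)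
  have primitive_zero : coshPowPrimitive n 0 = 0 := by simp [coshPowPrimitive]
  rw [integral_add (integrable_low.const_mul _) (integrable_high.const_mul _),
    integral_const_mul, integral_const_mul, primitive_zero] at ftc
  linarith

theorem integral_cosh_div_cosh_three_mul :
    ∫ α in Ioi (0 : ℝ), cosh α / cosh (3 * α) = π / (3 * √3) := by
  have hasDerivAt_primitive (α : ℝ) :
      HasDerivAt (fun α => 1 / √3 * arctan (√3 * tanh α)) (cosh α / cosh (3 * α)) α := by
    refine (((hasDerivAt_tanh α).const_mul (√3)).arctan.const_mul (1 / √3)).congr_deriv ?_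
    have := Real.cosh_pos α
    rw [cosh_three_mul_eq_mul_sinh_sq, Real.tanh_eq_sinh_div_cosh, mul_pow,
      Real.sq_sqrt (by norm_num)]
    field_simp
    rw [Real.cosh_sq]
    ring
  have tendsto_primitive : Tendsto (fun α => 1 / √3 * arctan (√3 * tanh α)) atTop
      (𝓝 (1 / √3 * arctan (√3 * 1))) :=
    ((Real.continuous_arctan.tendsto _).comp (tendsto_tanh_atTop.const_mul _)).const_mul _
  have integrable := integrable_cosh_div_cosh_three_mul_pow_succ 0
  simp only [zero_add, pow_one] at integrable
  rw [integral_Ioi_of_hasDerivAt_of_tendsto' (fun α _ => hasDerivAt_primitive α)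
    integrable.integrableOn tendsto_primitive, mul_one, Real.arctan_sqrt_three, Real.tanh_zero]
  simp
  field_simp

theorem ris_half_div_factorial_mul_integral_cosh (k : ℕ) :
    6 * (ris (1 / 2) k / k.factorial) *
      ∫ α in Ioi (0 : ℝ), cosh α / cosh (3 * α) ^ (2 * k + 1) = 2 * π / √3 * hypCoeff k := by
  induction k with
  | zero =>
    simp only [mul_zero, zero_add, pow_one, integral_cosh_div_cosh_three_mul, ris_zero,
      hypCoeff_zero, Nat.factorial_zero]
    field_simp
    norm_num
  | succ k ih =>
    have recurrence := integral_cosh_div_cosh_three_mul_pow_recurrence (2 * k)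
    push_cast at recurrence
    rw [show 2 * (k + 1) + 1 = 2 * k + 3 by ring, hypCoeff_succ, ← mul_assoc, ← ih, ris_succ,
      Nat.factorial_succ]
    push_cast
    field_simp
    linear_combination -(ris (1 / 2) k / 2) * recurrence

theorem lintegral_cosh_div_cosh_three_mul_pow (k : ℕ) {δ : ℝ} (hδ : 0 ≤ δ) :
    ∫⁻ α in Ioi (0 : ℝ), ofReal (6 * (ris (1 / 2) k / k.factorial) * δ ^ k *
        (cosh α / cosh (3 * α) ^ (2 * k + 1))) =
      ofReal (2 * π / √3) * (ofReal (hypCoeff k) * ofReal (δ ^ k)) := by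
  have := ris_pos one_half_pos k
  have := hypCoeff_pos k
  rw [← ofReal_integral_eq_lintegral_ofReal
      ((integrable_cosh_div_cosh_three_mul_pow_succ (2 * k)).integrableOn.const_mul _)
      (ae_of_all _ fun α => mul_nonneg (by positivity) (cosh_div_cosh_three_mul_pow_nonneg _ α)),
    integral_const_mul, ← ENNReal.ofReal_mul (by positivity), ← ENNReal.ofReal_mul (by positivity)]
  congr 1
  linear_combination δ ^ k * ris_half_div_factorial_mul_integral_cosh k

theorem hasSum_cosh_div_cosh_three_mul_pow {δ : ℝ} (h₀ : 0 ≤ δ) (h₁ : δ < 1) (α : ℝ) :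
    HasSum (fun k : ℕ => 6 * (ris (1 / 2) k / k.factorial) * δ ^ k *
        (cosh α / cosh (3 * α) ^ (2 * k + 1)))
      (6 * cosh α / √(cosh (3 * α) ^ 2 - δ)) := by
  have pos := Real.cosh_pos (3 * α)
  have lt_one : δ / cosh (3 * α) ^ 2 < 1 := by
    rw [div_lt_one (by positivity)]
    nlinarith [Real.one_le_cosh (3 * α)]
  have binomial := (hasSum_ris_div_factorial_mul_pow (1 / 2) (x := δ / cosh (3 * α) ^ 2)
    (by rwa [abs_of_nonneg (by positivity)])).mul_left (6 * cosh α / cosh (3 * α))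
  have factor : cosh (3 * α) ^ 2 - δ = cosh (3 * α) ^ 2 * (1 - δ / cosh (3 * α) ^ 2) := by
    field_simp
  have value : 6 * cosh α / cosh (3 * α) * (1 / (1 - δ / cosh (3 * α) ^ 2) ^ (1 / 2 : ℝ)) =
      6 * cosh α / √(cosh (3 * α) ^ 2 - δ) := by
    rw [factor, Real.sqrt_mul (by positivity), Real.sqrt_sq pos.le, ← Real.sqrt_eq_rpow]
    field_simp
  rw [value] at binomial
  refine binomial.congr_fun fun k => ?_
  rw [div_pow, ← pow_mul, pow_succ]
  field_simp

theorem lintegral_cosh_div_sqrt_cosh_three_mul_sq_sub {δ : ℝ} (h₀ : 0 ≤ δ) (h₁ : δ < 1) :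
    ∫⁻ α in Ioi (0 : ℝ), ofReal (6 * cosh α / √(cosh (3 * α) ^ 2 - δ)) =
      ofReal (2 * π / √3) * hypSeries δ := by
  rw [hypSeries, ← ENNReal.tsum_mul_left]
  simp_rw [← lintegral_cosh_div_cosh_three_mul_pow _ h₀]
  rw [← lintegral_tsum fun k => ((continuous_cosh_div_cosh_three_mul_pow
    (2 * k + 1)).measurable.const_mul _).ennreal_ofReal.aemeasurable]
  refine lintegral_congr fun α => ?_
  have expansion := hasSum_cosh_div_cosh_three_mul_pow h₀ h₁ α
  rw [← expansion.tsum_eq, ENNReal.ofReal_tsum_of_nonneg _ expansion.summable]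
  intro k
  have := ris_pos one_half_pos k
  exact mul_nonneg (by positivity) (cosh_div_cosh_three_mul_pow_nonneg _ α)

theorem ellipticIntegral_eq_hypSeries {p : ℝ} (h₀ : 0 < p) (h₁ : 27 * p ≤ 1) :
    ellipticIntegral p = ofReal (2 * π / √3) * hypSeries (1 - 27 * p) := by
  rw [← lintegral_cosh_div_sqrt_cosh_three_mul_sq_sub (by linarith) (by linarith),
    ellipticIntegral]
  refine setLIntegral_ofReal_eq_of_bijOn (f := fun α => 4 / 3 * sinh α ^ 2)
    (f' := fun α => 4 / 3 * (2 * sinh α * cosh α)) measurableSet_Ioi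
    (fun α _ => (((Real.hasDerivAt_sinh α).pow 2).const_mul (4 / 3)).congr_deriv (by simp))
    (InvOn.bijOn (f' := fun N => arsinh (√(3 / 4 * N))) ⟨fun α hα => ?_, fun N hN => ?_⟩
      (fun α hα => ?_) fun N hN => ?_) fun α hα => ?_
  · have := Real.sinh_pos_iff.2 hα
    beta_reduce
    rw [show 3 / 4 * (4 / 3 * sinh α ^ 2) = sinh α ^ 2 by ring, Real.sqrt_sq this.le,
      Real.arsinh_sinh]
  · rw [mem_Ioi] at hN
    beta_reduce
    rw [Real.sinh_arsinh, Real.sq_sqrt (by positivity)]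
    ring
  · have := Real.sinh_pos_iff.2 hα
    rw [mem_Ioi]
    positivity
  · rw [mem_Ioi] at hN
    rw [mem_Ioi, Real.arsinh_pos_iff]
    positivity
  · have := Real.sinh_pos_iff.2 hα
    have := Real.cosh_pos α
    have quartic : (4 / 3 * sinh α ^ 2) ^ 2 * (4 / 3 * sinh α ^ 2 + 1) ^ 2 +
        4 * p * (4 / 3 * sinh α ^ 2) =
        (4 / 9 * sinh α) ^ 2 * (cosh (3 * α) ^ 2 - (1 - 27 * p)) := by
      rw [Real.cosh_sq, Real.sinh_three_mul]
      ring
    have : 0 < cosh (3 * α) ^ 2 - (1 - 27 * p) := by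
      nlinarith [Real.one_le_cosh (3 * α)]
    rw [abs_of_pos (by positivity), quartic, Real.sqrt_mul (by positivity),
      Real.sqrt_sq (by positivity)]
    field_simp
    ring

/-! ### The cut triangle integral as a hypergeometric integral -/

/-- `27 x₁ x₂ x₃` at the point `((1 - e) cos² ψ, (1 - e) sin² ψ, e)` of the simplex
`x₁ + x₂ + x₃ = 1`. -/
noncomputable def simplexProduct (e ψ : ℝ) : ℝ :=
  27 * (((1 - e) * cos ψ ^ 2) * ((1 - e) * sin ψ ^ 2) * e)

@[fun_prop]
theorem continuous_uncurry_simplexProduct :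
    Continuous fun q : ℝ × ℝ => simplexProduct q.1 q.2 := by
  unfold simplexProduct
  fun_prop

theorem simplexProduct_le_one {e : ℝ} (ψ : ℝ) (h₀ : 0 < e) (h₁ : e < 1) :
    simplexProduct e ψ ≤ 1 := by
  have angular : cos ψ ^ 2 * sin ψ ^ 2 ≤ 1 / 4 := by
    nlinarith [Real.sin_sq_add_cos_sq ψ, sq_nonneg (cos ψ ^ 2 - sin ψ ^ 2)]
  have radial : 27 * (e * (1 - e) ^ 2) ≤ 4 := by
    have : 0 ≤ (3 * e - 1) ^ 2 * (4 - 3 * e) := mul_nonneg (sq_nonneg _) (by linarith)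
    linarith
  calc simplexProduct e ψ = 27 * (e * (1 - e) ^ 2) * (cos ψ ^ 2 * sin ψ ^ 2) := by
        unfold simplexProduct; ring
    _ ≤ 27 * (e * (1 - e) ^ 2) * (1 / 4) := by gcongr
    _ ≤ 1 := by linarith

theorem lintegral_complex_eq_hypSeries_simplexProduct {e ψ : ℝ} (he : e ∈ Ioo (0 : ℝ) 1)
    (hψ : ψ ∈ Ioo 0 (π / 2)) :
    ∫⁻ z : ℂ, ofReal (1 / (e * ‖z‖ ^ 2 * ‖1 - z‖ ^ 2 +
        (1 - e) * (‖1 - z‖ ^ 2 * cos ψ ^ 2 + ‖z‖ ^ 2 * sin ψ ^ 2))) =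
      ofReal π * (ofReal (2 * π / √3) * hypSeries (1 - simplexProduct e ψ)) := by
  obtain ⟨he₀, he₁⟩ := he
  have : 0 < cos ψ := Real.cos_pos_of_mem_Ioo ⟨by linarith [hψ.1, pi_pos], hψ.2⟩
  have : 0 < sin ψ := Real.sin_pos_of_mem_Ioo ⟨hψ.1, by linarith [hψ.2, pi_pos]⟩
  have : 0 < 1 - e := by linarith
  rw [simplexProduct, ← ellipticIntegral_eq_hypSeries (by positivity)
    (simplexProduct_le_one ψ he₀ he₁),
    ← lintegral_complex_one_div_feynman_eq_ellipticIntegral (by positivity) (by positivity) he₀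
      (by linear_combination (1 - e) * Real.sin_sq_add_cos_sq ψ)]
  exact lintegral_congr fun z => by congr 2; ring

theorem triangleIntegral_cutBubble_eq_lintegral_feynman :
    triangleIntegral (fun w => ofReal (cutBubble w)) (fun w => ofReal (cutBubble w))
        (fun w => ofReal (cutBubble w)) =
      ofReal (1 / π) * ∫⁻ e in Ioo (0 : ℝ) 1, ∫⁻ ψ in Ioo 0 (π / 2), ∫⁻ z : ℂ,
        ofReal (1 / √e) * ofReal (1 / (e * ‖z‖ ^ 2 * ‖1 - z‖ ^ 2 +
          (1 - e) * (‖1 - z‖ ^ 2 * cos ψ ^ 2 + ‖z‖ ^ 2 * sin ψ ^ 2))) := by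
  let F : (ℂ × ℝ) × ℝ → ENNReal := fun q => ofReal (1 / √q.1.2) *
    ofReal (1 / (q.1.2 * ‖q.1.1‖ ^ 2 * ‖1 - q.1.1‖ ^ 2 +
      (1 - q.1.2) * (‖1 - q.1.1‖ ^ 2 * cos q.2 ^ 2 + ‖q.1.1‖ ^ 2 * sin q.2 ^ 2)))
  have measurable_F : Measurable F := by fun_prop
  calc _ = ∫⁻ z : ℂ, ofReal (1 / π) *
        ∫⁻ e in Ioo (0 : ℝ) 1, ∫⁻ ψ in Ioo 0 (π / 2), F ((z, e), ψ) := by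
        refine lintegral_congr_ae ?_
        filter_upwards [ae_ne_complex 0, ae_ne_complex 1] with z ne_zero ne_one
        rw [lintegral_const_mul' _ _ ENNReal.ofReal_ne_top,
          ofReal_mul_lintegral_cutBubble_mul_mul (norm_pos_iff.2 ne_zero)
            (norm_pos_iff.2 (sub_ne_zero.2 ne_one.symm))]
    _ = ofReal (1 / π) *
        ∫⁻ e in Ioo (0 : ℝ) 1, ∫⁻ z : ℂ, ∫⁻ ψ in Ioo 0 (π / 2), F ((z, e), ψ) := by
        rw [lintegral_const_mul' _ _ ENNReal.ofReal_ne_top, lintegral_lintegral_swap]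
        exact measurable_F.lintegral_prod_right'.aemeasurable
    _ = _ := by
        congr 1
        refine lintegral_congr fun e => lintegral_lintegral_swap ?_
        exact (measurable_F.comp (by fun_prop : Measurable fun q : ℂ × ℝ =>
          ((q.1, e), q.2))).aemeasurable

theorem triangleIntegral_cutBubble_eq_lintegral_hypSeries :
    triangleIntegral (fun w => ofReal (cutBubble w)) (fun w => ofReal (cutBubble w))
        (fun w => ofReal (cutBubble w)) =
      ofReal (2 * π / √3) * ∫⁻ e in Ioo (0 : ℝ) 1, ∫⁻ ψ in Ioo 0 (π / 2),
        ofReal (1 / √e) * hypSeries (1 - simplexProduct e ψ) := by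
  have inv_pi_mul_pi : ofReal (1 / π) * ofReal π = 1 := by
    rw [← ENNReal.ofReal_mul (by positivity), one_div_mul_cancel pi_ne_zero, ENNReal.ofReal_one]
  rw [triangleIntegral_cutBubble_eq_lintegral_feynman,
    ← lintegral_const_mul' _ _ ENNReal.ofReal_ne_top,
    ← lintegral_const_mul' _ _ ENNReal.ofReal_ne_top]
  refine setLIntegral_congr_fun measurableSet_Ioo fun e he => ?_
  rw [← lintegral_const_mul' _ _ ENNReal.ofReal_ne_top,
    ← lintegral_const_mul' _ _ ENNReal.ofReal_ne_top]
  refine setLIntegral_congr_fun measurableSet_Ioo fun ψ hψ => ?_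
  rw [lintegral_const_mul' _ _ ENNReal.ofReal_ne_top,
    lintegral_complex_eq_hypSeries_simplexProduct he hψ, mul_left_comm (ofReal (1 / √e)),
    ← mul_assoc (ofReal (1 / π)), inv_pi_mul_pi, one_mul, mul_left_comm]

/-! ### Moments on the unit interval -/

section Moments

variable {μ ν : Measure ℝ}

theorem lintegral_pow_mul_one_sub_pow_add (hμ : ∀ᵐ x ∂μ, x ∈ Icc (0 : ℝ) 1) (j k : ℕ) :
    ∫⁻ x, ofReal (x ^ j * (1 - x) ^ (k + 1)) ∂μ + ∫⁻ x, ofReal (x ^ (j + 1) * (1 - x) ^ k) ∂μ =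
      ∫⁻ x, ofReal (x ^ j * (1 - x) ^ k) ∂μ := by
  rw [← lintegral_add_left (by fun_prop)]
  refine lintegral_congr_ae ?_
  filter_upwards [hμ] with x ⟨nonneg, le_one⟩
  have : 0 ≤ 1 - x := by linarith
  rw [← ENNReal.ofReal_add (by positivity) (by positivity)]
  congr 1
  ring

theorem lintegral_pow_mul_one_sub_pow_ne_top [IsFiniteMeasure μ]
    (hμ : ∀ᵐ x ∂μ, x ∈ Icc (0 : ℝ) 1) (j k : ℕ) :
    ∫⁻ x, ofReal (x ^ j * (1 - x) ^ k) ∂μ ≠ ⊤ := by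
  refine ne_top_of_le_ne_top (measure_ne_top μ univ) ?_
  rw [← lintegral_one]
  refine lintegral_mono_ae ?_
  filter_upwards [hμ] with x ⟨nonneg, le_one⟩
  have : 0 ≤ 1 - x := by linarith
  exact ENNReal.ofReal_le_one.2 (mul_le_one₀ (pow_le_one₀ nonneg le_one) (by positivity)
    (pow_le_one₀ this (by linarith)))

theorem lintegral_pow_mul_one_sub_pow_congr [IsFiniteMeasure μ]
    (hμ : ∀ᵐ x ∂μ, x ∈ Icc (0 : ℝ) 1) (hν : ∀ᵐ x ∂ν, x ∈ Icc (0 : ℝ) 1)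
    (moments : ∀ j : ℕ, ∫⁻ x, ofReal (x ^ j) ∂μ = ∫⁻ x, ofReal (x ^ j) ∂ν) (j k : ℕ) :
    ∫⁻ x, ofReal (x ^ j * (1 - x) ^ k) ∂μ = ∫⁻ x, ofReal (x ^ j * (1 - x) ^ k) ∂ν := by
  induction k generalizing j with
  | zero => simpa using moments j
  | succ k ih =>
    refine (ENNReal.add_left_inj (lintegral_pow_mul_one_sub_pow_ne_top hμ (j + 1) k)).1 ?_
    rw [lintegral_pow_mul_one_sub_pow_add hμ, ih (j + 1), lintegral_pow_mul_one_sub_pow_add hν, ih]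

theorem lintegral_tsum_mul_one_sub_pow_congr [IsFiniteMeasure μ]
    (hμ : ∀ᵐ x ∂μ, x ∈ Icc (0 : ℝ) 1) (hν : ∀ᵐ x ∂ν, x ∈ Icc (0 : ℝ) 1)
    (moments : ∀ j : ℕ, ∫⁻ x, ofReal (x ^ j) ∂μ = ∫⁻ x, ofReal (x ^ j) ∂ν) (c : ℕ → ENNReal) :
    ∫⁻ x, ∑' k, c k * ofReal ((1 - x) ^ k) ∂μ = ∫⁻ x, ∑' k, c k * ofReal ((1 - x) ^ k) ∂ν := by
  rw [lintegral_tsum fun k => by fun_prop, lintegral_tsum fun k => by fun_prop]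
  refine tsum_congr fun k => ?_
  rw [lintegral_const_mul _ (by fun_prop), lintegral_const_mul _ (by fun_prop)]
  simpa using congrArg (c k * ·) (lintegral_pow_mul_one_sub_pow_congr hμ hν moments 0 k)

end Moments

/-! ### The beta function -/

section Beta

variable {a b : ℝ}

theorem beta_one_right (ha : 0 < a) : beta a 1 = 1 / a := by
  have := Real.Gamma_pos_of_pos ha
  rw [beta, Real.Gamma_one, Real.Gamma_add_one ha.ne']
  field_simp

theorem beta_add_one_right (ha : 0 < a) (hb : 0 < b) :
    beta a (b + 1) = beta a b * (b / (a + b)) := by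
  have := Real.Gamma_pos_of_pos (add_pos ha hb)
  rw [beta, beta, ← add_assoc, Real.Gamma_add_one hb.ne', Real.Gamma_add_one (add_pos ha hb).ne']
  field_simp

theorem beta_add_one_left (ha : 0 < a) (hb : 0 < b) :
    beta (a + 1) b = beta a b * (a / (a + b)) := by
  have := Real.Gamma_pos_of_pos (add_pos ha hb)
  rw [beta, beta, add_right_comm, Real.Gamma_add_one ha.ne',
    Real.Gamma_add_one (add_pos ha hb).ne']
  field_simp

theorem lintegral_rpow_mul_one_sub_rpow (ha : 0 < a) (hb : 0 < b) :
    ∫⁻ y in Ioo (0 : ℝ) 1, ofReal (y ^ (a - 1) * (1 - y) ^ (b - 1)) = ofReal (beta a b) := by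
  have beta_pos := beta_pos ha hb
  have normalized := ProbabilityTheory.lintegral_betaPDF_eq_one ha hb
  simp only [ProbabilityTheory.lintegral_betaPDF, mul_assoc,
    ENNReal.ofReal_mul (one_div_pos.2 beta_pos).le] at normalized
  rw [lintegral_const_mul' _ _ ENNReal.ofReal_ne_top] at normalized
  have cancel : ofReal (beta a b) * ofReal (1 / beta a b) = 1 := by
    rw [← ENNReal.ofReal_mul beta_pos.le, mul_one_div_cancel beta_pos.ne', ENNReal.ofReal_one]
  rw [← one_mul (lintegral _ _), ← cancel, mul_assoc, normalized, mul_one]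

theorem mul_beta_natCast_add_one_le (ha : 1 / 2 ≤ a) (n : ℕ) :
    a * beta a (n + 1) ≤ 1 / √(n + 1) := by
  have a_pos : 0 < a := by linarith
  induction n with
  | zero => simp [beta_one_right a_pos, a_pos.ne']
  | succ n ih =>
    have sqrt_mul_le : √(n + 1 : ℝ) * √(n + 1 + 1) ≤ n + 3 / 2 := by
      rw [← Real.sqrt_mul (by positivity)]
      exact Real.sqrt_le_iff.2 ⟨by positivity, by nlinarith⟩
    push_cast
    rw [beta_add_one_right a_pos (by positivity), ← mul_assoc]
    calc a * beta a (n + 1) * ((n + 1) / (a + (n + 1)))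
        ≤ 1 / √(n + 1) * ((n + 1) / (n + 3 / 2)) := by
          gcongr ?_ * (_ / ?_)
          linarith
      _ = √(n + 1) / (n + 3 / 2) := by
          rw [one_div_mul_eq_div, div_right_comm, Real.div_sqrt]
      _ ≤ 1 / √(n + 1 + 1) := by
          rwa [div_le_div_iff₀ (by positivity) (by positivity), one_mul]

theorem tendsto_mul_beta_natCast_add_one (k : ℕ) :
    Tendsto (fun a => a * beta a (k + 1)) atTop (𝓝 (if k = 0 then 1 else 0)) := by
  induction k with
  | zero =>
    refine tendsto_const_nhds.congr' ?_
    filter_upwards [eventually_gt_atTop 0] with a ha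
    simp [beta_one_right ha, ha.ne']
  | succ k ih =>
    have ratio_tendsto : Tendsto (fun a : ℝ => (k + 1 : ℝ) / (a + (k + 1))) atTop (𝓝 0) :=
      (tendsto_atTop_add_const_right _ _ tendsto_id).const_div_atTop _
    have product_tendsto := ih.mul ratio_tendsto
    rw [mul_zero] at product_tendsto
    refine (product_tendsto.congr' ?_).trans_eq (by simp)
    filter_upwards [eventually_gt_atTop 0] with a ha
    push_cast
    rw [beta_add_one_right (b := k + 1) ha (by positivity)]
    ring

end Beta

/-! ### Gauss's evaluation of the Mellin transform -/

/-- `∫₀¹ y ^ (a - 1) ₂F₁(1/3, 2/3; 1 | 1 - y) dy`, integrated termwise; it equals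
`a⁻¹ ₂F₁(1/3, 2/3; a + 1 | 1)`. -/
noncomputable def hypMellin (a : ℝ) : ℝ := ∑' k : ℕ, hypCoeff k * beta a (k + 1)

section HypMellin

variable {a : ℝ}

theorem hypCoeff_mul_beta_nonneg (ha : 0 < a) (k : ℕ) : 0 ≤ hypCoeff k * beta a (k + 1) :=
  (mul_pos (hypCoeff_pos k) (beta_pos ha (by positivity))).le

theorem summable_hypCoeff_div_sqrt : Summable fun k : ℕ => hypCoeff k * (1 / √(k + 1)) := by
  refine ((Real.summable_one_div_nat_add_rpow 1 (3 / 2)).2 (by norm_num)).of_nonneg_of_le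
    (fun k => mul_nonneg (hypCoeff_pos k).le (by positivity)) fun k => ?_
  have rpow_eq : |(k : ℝ) + 1| ^ (3 / 2 : ℝ) = (k + 1) * √(k + 1) := by
    rw [abs_of_pos (by positivity), show (3 / 2 : ℝ) = 1 + 1 / 2 by norm_num,
      Real.rpow_add (by positivity), Real.rpow_one, Real.sqrt_eq_rpow]
  rw [rpow_eq, ← one_div_mul_one_div]
  gcongr
  exact hypCoeff_le k

theorem mul_hypCoeff_mul_beta_le (ha : 1 / 2 ≤ a) (k : ℕ) :
    a * (hypCoeff k * beta a (k + 1)) ≤ hypCoeff k * (1 / √(k + 1)) := by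
  rw [mul_left_comm]
  exact mul_le_mul_of_nonneg_left (mul_beta_natCast_add_one_le ha k) (hypCoeff_pos k).le

theorem summable_hypCoeff_mul_beta (ha : 1 / 2 ≤ a) :
    Summable fun k : ℕ => hypCoeff k * beta a (k + 1) := by
  have a_pos : 0 < a := by linarith
  refine (summable_mul_left_iff a_pos.ne').1 (summable_hypCoeff_div_sqrt.of_nonneg_of_le
    (fun k => mul_nonneg a_pos.le (hypCoeff_mul_beta_nonneg a_pos k))
    (mul_hypCoeff_mul_beta_le ha))

theorem sum_range_hypCoeff_mul_beta_add_one (ha : 0 < a) (n : ℕ) :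
    (a + 1 / 3) * (a + 2 / 3) * ∑ k ∈ Finset.range n, hypCoeff k * beta (a + 1) (k + 1) =
      a ^ 2 * ∑ k ∈ Finset.range n, hypCoeff k * beta a (k + 1) +
        n * (a * (hypCoeff n * beta a (n + 1))) := by
  induction n with
  | zero => simp
  | succ n ih =>
    push_cast
    rw [Finset.sum_range_succ, Finset.sum_range_succ, mul_add, ih, hypCoeff_succ,
      beta_add_one_left ha (by positivity),
      beta_add_one_right (b := n + 1) ha (by positivity)]
    field_simp
    ring

theorem tendsto_natCast_mul_mul_hypCoeff_mul_beta (ha : 1 / 2 ≤ a) :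
    Tendsto (fun n : ℕ => n * (a * (hypCoeff n * beta a (n + 1)))) atTop (𝓝 0) := by
  have a_pos : 0 < a := by linarith
  have sqrt_tendsto : Tendsto (fun n : ℕ => √(1 / (n + 1 : ℝ))) atTop (𝓝 0) := by
    simpa using tendsto_one_div_add_atTop_nhds_zero_nat.sqrt
  refine squeeze_zero (fun n => mul_nonneg n.cast_nonneg
    (mul_nonneg a_pos.le (hypCoeff_mul_beta_nonneg a_pos n))) (fun n => ?_) sqrt_tendsto
  have natCast_mul_hypCoeff_le_one : n * hypCoeff n ≤ 1 :=
    calc n * hypCoeff n ≤ n * (1 / (n + 1)) := by gcongr; exact hypCoeff_le n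
      _ ≤ 1 := by rw [mul_one_div]; exact div_le_one_of_le₀ (by linarith) (by positivity)
  calc n * (a * (hypCoeff n * beta a (n + 1)))
      ≤ n * (hypCoeff n * (1 / √(n + 1))) :=
        mul_le_mul_of_nonneg_left (mul_hypCoeff_mul_beta_le ha n) n.cast_nonneg
    _ = n * hypCoeff n * (1 / √(n + 1)) := by ring
    _ ≤ 1 / √(n + 1) := mul_le_of_le_one_left (by positivity) natCast_mul_hypCoeff_le_one
    _ = √(1 / (n + 1)) := by rw [Real.sqrt_div zero_le_one, Real.sqrt_one]

theorem hypMellin_add_one (ha : 1 / 2 ≤ a) :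
    (a + 1 / 3) * (a + 2 / 3) * hypMellin (a + 1) = a ^ 2 * hypMellin a := by
  have lhs_tendsto := (summable_hypCoeff_mul_beta
    (a := a + 1) (by linarith)).hasSum.tendsto_sum_nat.const_mul ((a + 1 / 3) * (a + 2 / 3))
  have rhs_tendsto := ((summable_hypCoeff_mul_beta ha).hasSum.tendsto_sum_nat.const_mul
    (a ^ 2)).add (tendsto_natCast_mul_mul_hypCoeff_mul_beta ha)
  rw [add_zero] at rhs_tendsto
  exact tendsto_nhds_unique lhs_tendsto
    (rhs_tendsto.congr fun n => (sum_range_hypCoeff_mul_beta_add_one (by linarith) n).symm)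

theorem ris_mul_ris_mul_hypMellin_add_natCast (ha : 1 / 2 ≤ a) (n : ℕ) :
    ris (a + 1 / 3) n * ris (a + 2 / 3) n * hypMellin (a + n) = ris a n ^ 2 * hypMellin a := by
  induction n with
  | zero => simp [ris_zero]
  | succ n ih =>
    have recurrence := hypMellin_add_one (a := a + n) (ha.trans (by simp))
    push_cast
    rw [← add_assoc, ris_succ, ris_succ, ris_succ]
    linear_combination ris (a + 1 / 3) n * ris (a + 2 / 3) n * recurrence + (a + n) ^ 2 * ih

theorem tendsto_mul_hypMellin_atTop : Tendsto (fun a => a * hypMellin a) atTop (𝓝 1) := by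
  have limit_eq : ∑' k : ℕ, hypCoeff k * (if k = 0 then (1 : ℝ) else 0) = 1 := by
    simp [hypCoeff_zero]
  rw [← limit_eq]
  have dominated := tendsto_tsum_of_dominated_convergence summable_hypCoeff_div_sqrt
    (𝓕 := atTop) (f := fun a k => a * (hypCoeff k * beta a (k + 1)))
    (g := fun k => hypCoeff k * (if k = 0 then (1 : ℝ) else 0)) (fun k => ?_) ?_
  · simpa only [hypMellin, tsum_mul_left] using dominated
  · simpa only [mul_left_comm] using (tendsto_mul_beta_natCast_add_one k).const_mul (hypCoeff k)
  · filter_upwards [eventually_ge_atTop (1 / 2)] with a ha k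
    have a_pos : 0 < a := by linarith
    rw [Real.norm_of_nonneg (mul_nonneg a_pos.le (hypCoeff_mul_beta_nonneg a_pos k))]
    exact mul_hypCoeff_mul_beta_le ha k

theorem ris_add_one_mul_gammaSeq (ha : 0 < a) (n : ℕ) :
    ris a (n + 1) * Real.GammaSeq a n = n ^ a * n.factorial :=
  mul_div_cancel₀ _ (ris_pos ha (n + 1)).ne'

/-- The factors `n ^ s * n!` of Euler's limit formula for `Γ` cancel up to a single power of `n`,
which is compensated by `hypMellin a ∼ 1 / a`. -/
theorem natCast_mul_hypMellin_mul_gammaSeq (ha : 1 / 2 ≤ a) {n : ℕ} (hn : n ≠ 0) :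
    n * hypMellin (a + (n + 1 : ℕ)) * Real.GammaSeq a n ^ 2 =
      hypMellin a * (Real.GammaSeq (a + 1 / 3) n * Real.GammaSeq (a + 2 / 3) n) := by
  have a_pos : 0 < a := by linarith
  have iterated := ris_mul_ris_mul_hypMellin_add_natCast ha (n + 1)
  have ris_mul_gammaSeq := ris_add_one_mul_gammaSeq a_pos n
  have ris_mul_gammaSeq₁ := ris_add_one_mul_gammaSeq (a := a + 1 / 3) (by linarith) n
  have ris_mul_gammaSeq₂ := ris_add_one_mul_gammaSeq (a := a + 2 / 3) (by linarith) n
  have n_pos : (0 : ℝ) < n := by positivity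
  have powers : (n : ℝ) ^ (a + 1 / 3) * n ^ (a + 2 / 3) = n * (n ^ a) ^ 2 := by
    rw [← Real.rpow_add n_pos, sq, ← Real.rpow_add n_pos, ← Real.rpow_one_add' n_pos.le
      (by linarith)]
    congr 1
    ring
  have := ris_pos a_pos (n + 1)
  have : 0 < ris (a + 1 / 3) (n + 1) := ris_pos (by linarith) _
  have : 0 < ris (a + 2 / 3) (n + 1) := ris_pos (by linarith) _
  generalize Real.GammaSeq a n = G, Real.GammaSeq (a + 1 / 3) n = G₁,
    Real.GammaSeq (a + 2 / 3) n = G₂ at *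
  refine mul_left_cancel₀ (mul_pos (mul_pos ‹0 < ris (a + 1 / 3) (n + 1)›
    ‹0 < ris (a + 2 / 3) (n + 1)›) (pow_pos ‹0 < ris a (n + 1)› 2)).ne' ?_
  generalize ris a (n + 1) = r, ris (a + 1 / 3) (n + 1) = r₁, ris (a + 2 / 3) (n + 1) = r₂ at *
  calc r₁ * r₂ * r ^ 2 * (n * hypMellin (a + (n + 1 : ℕ)) * G ^ 2)
      = n * (r * G) ^ 2 * (r₁ * r₂ * hypMellin (a + (n + 1 : ℕ))) := by ring
    _ = r ^ 2 * hypMellin a * (n * ((n : ℝ) ^ a) ^ 2) * (n.factorial : ℝ) ^ 2 := by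
      rw [ris_mul_gammaSeq, iterated]; ring
    _ = r ^ 2 * hypMellin a * ((r₁ * G₁) * (r₂ * G₂)) := by
      rw [ris_mul_gammaSeq₁, ris_mul_gammaSeq₂, ← powers]; ring
    _ = r₁ * r₂ * r ^ 2 * (hypMellin a * (G₁ * G₂)) := by ring

theorem hypMellin_eq_gamma (ha : 1 / 2 ≤ a) :
    hypMellin a = Gamma a ^ 2 / (Gamma (a + 1 / 3) * Gamma (a + 2 / 3)) := by
  have : 0 < Gamma (a + 1 / 3) := Real.Gamma_pos_of_pos (by linarith)
  have : 0 < Gamma (a + 2 / 3) := Real.Gamma_pos_of_pos (by linarith)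
  rw [eq_div_iff (by positivity)]
  have shift_tendsto : Tendsto (fun n : ℕ => a + (n + 1 : ℕ)) atTop atTop :=
    tendsto_atTop_add_const_left _ _ (tendsto_natCast_atTop_atTop.comp (tendsto_add_atTop_nat 1))
  have hypMellin_tendsto : Tendsto (fun n : ℕ => n * hypMellin (a + (n + 1 : ℕ))) atTop (𝓝 1) := by
    have ratio_tendsto := (tendsto_natCast_div_add_atTop (a + 1)).mul
      (tendsto_mul_hypMellin_atTop.comp shift_tendsto)
    rw [one_mul] at ratio_tendsto
    refine ratio_tendsto.congr fun n => ?_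
    have : (0 : ℝ) < n + (a + 1) := by positivity
    simp only [Function.comp_apply]
    push_cast
    field_simp
    ring
  have lhs_tendsto := ((Real.GammaSeq_tendsto_Gamma (a + 1 / 3)).mul
    (Real.GammaSeq_tendsto_Gamma (a + 2 / 3))).const_mul (hypMellin a)
  have rhs_tendsto := hypMellin_tendsto.mul ((Real.GammaSeq_tendsto_Gamma a).pow 2)
  rw [one_mul] at rhs_tendsto
  refine tendsto_nhds_unique lhs_tendsto (rhs_tendsto.congr' ?_)
  filter_upwards [eventually_ne_atTop 0] with n hn
  exact natCast_mul_hypMellin_mul_gammaSeq ha hn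

theorem hypMellin_one_half : hypMellin (1 / 2) = 3 := by
  have reflection := Real.Gamma_mul_Gamma_one_sub (1 / 6)
  rw [show π * (1 / 6) = π / 6 by ring, Real.sin_pi_div_six] at reflection
  rw [hypMellin_eq_gamma le_rfl, Real.Gamma_one_half_eq, Real.sq_sqrt pi_pos.le,
    show (1 / 2 + 1 / 3 : ℝ) = 1 - 1 / 6 by norm_num,
    show (1 / 2 + 2 / 3 : ℝ) = 1 / 6 + 1 by norm_num, Real.Gamma_add_one (by norm_num),
    mul_left_comm, mul_comm (Gamma _), reflection]
  field_simp
  norm_num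

theorem lintegral_rpow_mul_hypSeries_one_sub (ha : 1 / 2 ≤ a) :
    ∫⁻ y in Ioo (0 : ℝ) 1, ofReal (y ^ (a - 1)) * hypSeries (1 - y) = ofReal (hypMellin a) := by
  have a_pos : 0 < a := by linarith
  have termwise (k : ℕ) : ∫⁻ y in Ioo (0 : ℝ) 1,
      ofReal (y ^ (a - 1)) * (ofReal (hypCoeff k) * ofReal ((1 - y) ^ k)) =
      ofReal (hypCoeff k * beta a (k + 1)) := by
    rw [ENNReal.ofReal_mul (hypCoeff_pos k).le,
      ← lintegral_rpow_mul_one_sub_rpow a_pos (by positivity),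
      ← lintegral_const_mul' _ _ ENNReal.ofReal_ne_top]
    refine setLIntegral_congr_fun measurableSet_Ioo fun y hy => ?_
    rw [mul_left_comm, ENNReal.ofReal_mul (Real.rpow_nonneg hy.1.le _), add_sub_cancel_right,
      Real.rpow_natCast]
  unfold hypSeries
  simp_rw [← ENNReal.tsum_mul_left]
  rw [lintegral_tsum fun k => by fun_prop, tsum_congr termwise, hypMellin,
    ENNReal.ofReal_tsum_of_nonneg (hypCoeff_mul_beta_nonneg a_pos) (summable_hypCoeff_mul_beta ha)]

end HypMellin

/-! ### The law of the simplex product -/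

theorem prod_odd_div_even_eq_ris_div_factorial (j : ℕ) :
    ∏ i ∈ Finset.range j, (2 * (i : ℝ) + 1) / (2 * i + 2) = ris (1 / 2) j / j.factorial := by
  induction j with
  | zero => simp [ris_zero]
  | succ j ih =>
    rw [Finset.prod_range_succ, ih, ris_succ, Nat.factorial_succ]
    push_cast
    field_simp
    ring

theorem lintegral_cos_sq_mul_sin_sq_pow (j : ℕ) :
    ∫⁻ ψ in Ioo 0 (π / 2), ofReal ((cos ψ ^ 2 * sin ψ ^ 2) ^ j) =
      ofReal (π / 2 * (ris (1 / 2) j / j.factorial) / 4 ^ j) := by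
  have double_angle (ψ : ℝ) :
      (cos ψ ^ 2 * sin ψ ^ 2) ^ j = (1 / 4) ^ j * sin (2 * ψ) ^ (2 * j) := by
    rw [Real.sin_two_mul, pow_mul, ← mul_pow (1 / 4 : ℝ)]
    congr 1
    ring
  have integrable : IntegrableOn (fun ψ : ℝ => (cos ψ ^ 2 * sin ψ ^ 2) ^ j) (Ioc 0 (π / 2)) :=
    (Continuous.intervalIntegrable (by fun_prop) 0 (π / 2)).1
  rw [setLIntegral_congr Ioo_ae_eq_Ioc, ← ofReal_integral_eq_lintegral_ofReal integrable
    (ae_of_all _ fun _ => by positivity), ← intervalIntegral.integral_of_le (by positivity)]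
  simp_rw [double_angle]
  rw [intervalIntegral.integral_const_mul,
    intervalIntegral.integral_comp_mul_left (fun z => sin z ^ (2 * j)) two_ne_zero, mul_zero,
    mul_div_cancel₀ _ two_ne_zero, integral_sin_pow_even, prod_odd_div_even_eq_ris_div_factorial,
    smul_eq_mul, one_div_pow]
  congr 1
  ring

theorem pow_mul_beta_mul_ris_eq_hypMellin (j : ℕ) :
    27 ^ j * beta (j + 1 / 2) (2 * j + 1) * (π / 2 * (ris (1 / 2) j / j.factorial) / 4 ^ j) =
      π / 3 * hypMellin (j + 1 / 2) := by
  induction j with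
  | zero =>
    simp only [CharP.cast_eq_zero, zero_add, mul_zero, hypMellin_one_half, ris_zero, pow_zero,
      beta_one_right one_half_pos, Nat.factorial_zero, Nat.cast_one]
    ring
  | succ j ih =>
    have recurrence := hypMellin_add_one (a := j + 1 / 2) (by simp)
    have beta_eq : beta (j + 1 / 2 + 1) (2 * j + 1 + 1 + 1) = beta (j + 1 / 2) (2 * j + 1) *
        ((2 * j + 1) * (2 * j + 2) * (j + 1 / 2) /
          ((3 * j + 3 / 2) * (3 * j + 5 / 2) * (3 * j + 7 / 2))) := by
      rw [beta_add_one_left (by positivity) (by positivity),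
        beta_add_one_right (b := 2 * j + 1 + 1) (by positivity) (by positivity),
        beta_add_one_right (by positivity) (by positivity)]
      field_simp
      ring
    have hypMellin_eq : π / 3 * hypMellin (j + 1 / 2 + 1) =
        π / 3 * hypMellin (j + 1 / 2) * ((j + 1 / 2) ^ 2 / ((j + 5 / 6) * (j + 7 / 6))) := by
      rw [mul_div_assoc', eq_div_iff (by positivity)]
      linear_combination π / 3 * recurrence
    push_cast
    rw [add_right_comm, show 2 * ((j : ℝ) + 1) + 1 = 2 * j + 1 + 1 + 1 by ring, beta_eq,
      hypMellin_eq, ← ih, ris_succ, Nat.factorial_succ, pow_succ, pow_succ]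
    push_cast
    field_simp
    ring

theorem one_div_sqrt_mul_pow {y : ℝ} (hy : 0 < y) (j : ℕ) :
    1 / √y * y ^ j = y ^ ((j : ℝ) + 1 / 2 - 1) := by
  rw [Real.sqrt_eq_rpow, one_div, ← Real.rpow_neg hy.le, ← Real.rpow_natCast, ← Real.rpow_add hy]
  congr 1
  ring

theorem lintegral_simplexProduct_pow (j : ℕ) :
    ∫⁻ e in Ioo (0 : ℝ) 1, ∫⁻ ψ in Ioo 0 (π / 2),
      ofReal (1 / √e) * ofReal (simplexProduct e ψ ^ j) =
      ofReal (π / 3) * ofReal (hypMellin (j + 1 / 2)) := by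
  have : 0 < ris (1 / 2) j := ris_pos (by norm_num) j
  set wallis := π / 2 * (ris (1 / 2) j / j.factorial) / 4 ^ j with wallis_eq
  have : 0 ≤ wallis := by positivity
  have inner_eq (e : ℝ) (he : e ∈ Ioo 0 1) : ∫⁻ ψ in Ioo 0 (π / 2),
      ofReal (1 / √e) * ofReal (simplexProduct e ψ ^ j) =
      ofReal (27 ^ j * wallis) *
        ofReal (e ^ ((j : ℝ) + 1 / 2 - 1) * (1 - e) ^ ((2 * j + 1 : ℝ) - 1)) := by
    have := he.1
    have : 0 < 1 - e := by linarith [he.2]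
    have separate (ψ : ℝ) : ofReal (1 / √e) * ofReal (simplexProduct e ψ ^ j) =
        ofReal (27 ^ j * (1 / √e * e ^ j * (1 - e) ^ (2 * j))) *
          ofReal ((cos ψ ^ 2 * sin ψ ^ 2) ^ j) := by
      rw [← ENNReal.ofReal_mul (by positivity), ← ENNReal.ofReal_mul (by positivity),
        simplexProduct]
      simp only [mul_pow]
      congr 1
      ring
    simp_rw [separate]
    rw [lintegral_const_mul' _ _ ENNReal.ofReal_ne_top, lintegral_cos_sq_mul_sin_sq_pow,
      ← wallis_eq, one_div_sqrt_mul_pow he.1, ← ENNReal.ofReal_mul (by positivity),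
      ← ENNReal.ofReal_mul (by positivity), add_sub_cancel_right]
    norm_cast
    congr 1
    ring
  rw [setLIntegral_congr_fun measurableSet_Ioo inner_eq,
    lintegral_const_mul' _ _ ENNReal.ofReal_ne_top,
    lintegral_rpow_mul_one_sub_rpow (by positivity) (by positivity),
    ← ENNReal.ofReal_mul (by positivity), ← ENNReal.ofReal_mul (by positivity),
    ← pow_mul_beta_mul_ris_eq_hypMellin, mul_right_comm]

theorem lintegral_hypSeries_one_sub_mul_pow (j : ℕ) :
    ∫⁻ y in Ioo (0 : ℝ) 1, ofReal (1 / √y) * hypSeries (1 - y) * ofReal (y ^ j) =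
      ofReal (hypMellin (j + 1 / 2)) := by
  rw [← lintegral_rpow_mul_hypSeries_one_sub (by simp)]
  refine setLIntegral_congr_fun measurableSet_Ioo fun y hy => ?_
  rw [mul_right_comm, ← ENNReal.ofReal_mul (by positivity), one_div_sqrt_mul_pow hy.1]

/-- The image of the measure `de dψ / √e` on `(0, 1) × (0, π / 2)` under the simplex product. -/
noncomputable def simplexProductLaw : Measure ℝ :=
  (((volume.restrict (Ioo 0 1)).prod (volume.restrict (Ioo 0 (π / 2)))).withDensity
    fun q => ofReal (1 / √q.1)).map fun q => simplexProduct q.1 q.2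

/-- The measure `₂F₁(1/3, 2/3; 1 | 1 - y) dy / √y` on `(0, 1)`. -/
noncomputable def hypLaw : Measure ℝ :=
  (volume.restrict (Ioo 0 1)).withDensity fun y => ofReal (1 / √y) * hypSeries (1 - y)

theorem lintegral_simplexProductLaw {f : ℝ → ENNReal} (hf : Measurable f) :
    ∫⁻ y, f y ∂simplexProductLaw = ∫⁻ e in Ioo (0 : ℝ) 1, ∫⁻ ψ in Ioo 0 (π / 2),
      ofReal (1 / √e) * f (simplexProduct e ψ) := by
  rw [simplexProductLaw, lintegral_map hf (by fun_prop),
    lintegral_withDensity_eq_lintegral_mul _ (by fun_prop) (by fun_prop),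
    lintegral_prod _ (by fun_prop)]
  rfl

theorem lintegral_hypLaw {f : ℝ → ENNReal} (hf : Measurable f) :
    ∫⁻ y, f y ∂hypLaw =
      ∫⁻ y in Ioo (0 : ℝ) 1, ofReal (1 / √y) * hypSeries (1 - y) * f y :=
  lintegral_withDensity_eq_lintegral_mul _ (by fun_prop) hf

theorem ae_simplexProductLaw_mem_Icc : ∀ᵐ y ∂simplexProductLaw, y ∈ Icc (0 : ℝ) 1 := by
  rw [simplexProductLaw, ae_map_iff (p := (· ∈ Icc 0 1)) (by fun_prop) measurableSet_Icc]
  refine (withDensity_absolutelyContinuous _ _).ae_le ?_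
  rw [Measure.prod_restrict]
  filter_upwards [ae_restrict_mem (measurableSet_Ioo.prod measurableSet_Ioo)] with q hq
  have := hq.1.1
  have : 0 < 1 - q.1 := by linarith [hq.1.2]
  exact ⟨by unfold simplexProduct; positivity, simplexProduct_le_one _ hq.1.1 hq.1.2⟩

theorem ae_hypLaw_mem_Icc : ∀ᵐ y ∂hypLaw, y ∈ Icc (0 : ℝ) 1 :=
  (withDensity_absolutelyContinuous _ _).ae_le <| by
    filter_upwards [ae_restrict_mem measurableSet_Ioo] with y hy using Ioo_subset_Icc_self hy

instance : IsFiniteMeasure simplexProductLaw where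
  measure_univ_lt_top := by
    have mass := lintegral_simplexProduct_pow 0
    simp only [pow_zero] at mass
    rw [← lintegral_one, ← ENNReal.ofReal_one, lintegral_simplexProductLaw (by fun_prop), mass]
    exact ENNReal.mul_lt_top ENNReal.ofReal_lt_top ENNReal.ofReal_lt_top

theorem lintegral_pow_simplexProductLaw (j : ℕ) :
    ∫⁻ y, ofReal (y ^ j) ∂simplexProductLaw =
      ∫⁻ y, ofReal (y ^ j) ∂(ofReal (π / 3) • hypLaw) := by
  rw [lintegral_smul_measure, lintegral_simplexProductLaw (by fun_prop),
    lintegral_hypLaw (by fun_prop), lintegral_simplexProduct_pow,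
    lintegral_hypSeries_one_sub_mul_pow, smul_eq_mul]

theorem lintegral_hypSeries_simplexProduct_eq_lintegral_sq :
    ∫⁻ e in Ioo (0 : ℝ) 1, ∫⁻ ψ in Ioo 0 (π / 2),
      ofReal (1 / √e) * hypSeries (1 - simplexProduct e ψ) =
      ofReal (π / 3) *
        ∫⁻ y in Ioo (0 : ℝ) 1, ofReal (1 / √y) * hypSeries (1 - y) * hypSeries (1 - y) := by
  rw [← lintegral_simplexProductLaw (f := fun y => hypSeries (1 - y)) (by fun_prop),
    ← lintegral_hypLaw (f := fun y => hypSeries (1 - y)) (by fun_prop), ← smul_eq_mul,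
    ← lintegral_smul_measure]
  exact lintegral_tsum_mul_one_sub_pow_congr ae_simplexProductLaw_mem_Icc
    (Measure.ae_smul_measure ae_hypLaw_mem_Icc _) lintegral_pow_simplexProductLaw _

/-! ### Back to real integrals -/

theorem pFq_one_third_two_thirds_one_eq_tsum (x : ℝ) :
    pFq [1 / 3, 2 / 3] [1] x = ∑' n, hypCoeff n * x ^ n := by
  refine tsum_congr fun n => ?_
  simp only [List.map_cons, List.map_nil, List.prod_cons, List.prod_nil, mul_one, ris_one, hypCoeff]
  ring

theorem pFq_one_third_two_thirds_one_nonneg {x : ℝ} (hx : 0 ≤ x) :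
    0 ≤ pFq [1 / 3, 2 / 3] [1] x := by
  rw [pFq_one_third_two_thirds_one_eq_tsum]
  exact tsum_nonneg fun n => mul_nonneg (hypCoeff_pos n).le (pow_nonneg hx n)

theorem hypCoeff_le_one (n : ℕ) : hypCoeff n ≤ 1 :=
  (hypCoeff_le n).trans (div_le_one_of_le₀ (by simp) (by positivity))

theorem ofReal_pFq_one_third_two_thirds_one {x : ℝ} (h₀ : 0 ≤ x) (h₁ : x < 1) :
    ofReal (pFq [1 / 3, 2 / 3] [1] x) = hypSeries x := by
  have nonneg (n : ℕ) : 0 ≤ hypCoeff n * x ^ n := mul_nonneg (hypCoeff_pos n).le (pow_nonneg h₀ n)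
  have summable : Summable fun n => hypCoeff n * x ^ n :=
    (summable_geometric_of_lt_one h₀ h₁).of_nonneg_of_le nonneg
      fun n => mul_le_of_le_one_left (pow_nonneg h₀ n) (hypCoeff_le_one n)
  rw [pFq_one_third_two_thirds_one_eq_tsum, ENNReal.ofReal_tsum_of_nonneg nonneg summable]
  exact tsum_congr fun n => ENNReal.ofReal_mul (hypCoeff_pos n).le

theorem lintegral_Ioo_comp_one_sub (f : ℝ → ENNReal) :
    ∫⁻ y in Ioo (0 : ℝ) 1, f (1 - y) = ∫⁻ x in Ioo (0 : ℝ) 1, f x := by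
  have preimage_eq : (fun y : ℝ => 1 - y) ⁻¹' Ioo 0 1 = Ioo 0 1 := by simp
  have change := (volume.measurePreserving_sub_left (1 : ℝ)).setLIntegral_comp_preimage_emb
    (MeasurableEquiv.subLeft (1 : ℝ)).measurableEmbedding f (Ioo 0 1)
  rwa [preimage_eq] at change

theorem integral_pFq_sq_div_sqrt_one_sub_eq_toReal :
    ∫ x in (0 : ℝ)..1, pFq [1 / 3, 2 / 3] [1] x ^ 2 / √(1 - x) =
      (∫⁻ y in Ioo (0 : ℝ) 1, ofReal (1 / √y) * hypSeries (1 - y) * hypSeries (1 - y)).toReal := by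
  have integrand_eq (x : ℝ) (hx : x ∈ Ioo 0 1) : pFq [1 / 3, 2 / 3] [1] x ^ 2 / √(1 - x) =
      (ofReal (1 / √(1 - x)) * hypSeries x * hypSeries x).toReal := by
    rw [← ofReal_pFq_one_third_two_thirds_one hx.1.le hx.2, ENNReal.toReal_mul, ENNReal.toReal_mul,
      ENNReal.toReal_ofReal (by positivity),
      ENNReal.toReal_ofReal (pFq_one_third_two_thirds_one_nonneg hx.1.le)]
    ring
  have finite : ∀ᵐ x ∂volume.restrict (Ioo (0 : ℝ) 1),
      ofReal (1 / √(1 - x)) * hypSeries x * hypSeries x < ⊤ := by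
    filter_upwards [ae_restrict_mem measurableSet_Ioo] with x hx
    rw [← ofReal_pFq_one_third_two_thirds_one hx.1.le hx.2, ← ENNReal.ofReal_mul (by positivity),
      ← ENNReal.ofReal_mul (mul_nonneg (by positivity)
        (pFq_one_third_two_thirds_one_nonneg hx.1.le))]
    exact ENNReal.ofReal_lt_top
  rw [intervalIntegral.integral_of_le zero_le_one, ← setIntegral_congr_set Ioo_ae_eq_Ioc,
    setIntegral_congr_fun measurableSet_Ioo integrand_eq, integral_toReal (by fun_prop) finite,
    ← lintegral_Ioo_comp_one_sub]
  simp only [sub_sub_cancel]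

theorem integral_I0_mul_K0_pow_five_mul_eq_toReal_sunriseIntegral :
    ∫ t in Ioi (0 : ℝ), I0 t * K0 t ^ 5 * t = sunriseIntegral.toReal := by
  rw [sunriseIntegral, integral_eq_lintegral_of_nonneg_ae]
  · filter_upwards [ae_restrict_mem measurableSet_Ioi] with t (ht : 0 < t)
    exact mul_nonneg (mul_nonneg (I0_nonneg t) (pow_nonneg (K0_nonneg t) 5)) ht.le
  · exact Measurable.aestronglyMeasurable (by fun_prop)

theorem sunrise_eq_laporta_single_integral :
    16 * (∫ t in Ioi (0:ℝ), I0 t * (K0 t)^5 * t)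
    = (4 * Real.sqrt 3 * π^3 / 27) *
        ∫ x in (0:ℝ)..1, (pFq [1/3, 2/3] [1] x)^2 / Real.sqrt (1 - x) := by
  have sunrise_eq := congrArg ENNReal.toReal twenty_four_mul_sunriseIntegral
  rw [triangleIntegral_cutBubble_eq_lintegral_hypSeries,
    lintegral_hypSeries_simplexProduct_eq_lintegral_sq] at sunrise_eq
  simp only [ENNReal.toReal_mul, ENNReal.toReal_ofNat] at sunrise_eq
  rw [← integral_I0_mul_K0_pow_five_mul_eq_toReal_sunriseIntegral,
    ← integral_pFq_sq_div_sqrt_one_sub_eq_toReal, ENNReal.toReal_ofReal (by positivity),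
    ENNReal.toReal_ofReal (by positivity), ENNReal.toReal_ofReal (by positivity)] at sunrise_eq
  have rationalize : 2 * π / √3 = 2 * π * √3 / 3 := by
    rw [div_eq_div_iff (by positivity) (by positivity), mul_assoc _ √3,
      Real.mul_self_sqrt zero_le_three]
  rw [rationalize] at sunrise_eq
  linear_combination (2 / 3 : ℝ) * sunrise_eq
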